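/- arXiv:math/0201175 — 10 statements merged into one kernel-verified Lean document; each statement's English description precedes it below -/
import Mathlib

section
/- Let A → C be a homomorphism of commutative rings, let f ∈ A, and let M be a C-module (regarded also as an A-module via A → C). Assume: (a) the localization M_f = M[f⁻¹] is a flat module over C_f = C[f⁻¹]; (b) M/fM is a flat module over C/fC; (c) Tor₁^A(C, A/fA) = 0; and (d) Tor_i^A(M, A/fA) = 0 for i = 1, 2. Then M is a flat C-module. -/
open CategoryTheory

namespace FlatGlue
open TensorProduct Function LinearMap

section gen
variable {A : Type} [CommRing A]
variable {X1 X2 X3 Y1 Y2 Y3 : Type} [AddCommGroup X1] [AddCommGroup X2] [AddCommGroup X3]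
  [AddCommGroup Y1] [AddCommGroup Y2] [AddCommGroup Y3] [Module A X1] [Module A X2] [Module A X3]
  [Module A Y1] [Module A Y2] [Module A Y3]

theorem lr_comm (a : X1 →ₗ[A] X2) (i : Y1 →ₗ[A] Y2) (x : X1 ⊗[A] Y1) :
    lTensor X2 i (rTensor Y1 a x) = rTensor Y2 a (lTensor X1 i x) := by
  rw [← LinearMap.comp_apply, ← LinearMap.comp_apply, rTensor_comp_lTensor, lTensor_comp_rTensor]

theorem snake (a : X1 →ₗ[A] X2) (b : X2 →ₗ[A] X3) (hab : Exact a b) (hb : Surjective b)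
    (i : Y1 →ₗ[A] Y2) (p : Y2 →ₗ[A] Y3) (hip : Exact i p) (hp : Surjective p)
    (h1 : Injective (lTensor X2 i)) (h2 : Injective (rTensor Y3 a)) :
    Injective (lTensor X3 i) := by
  rw [injective_iff_map_eq_zero]
  intro x hx
  obtain ⟨x', rfl⟩ := rTensor_surjective Y1 hb x
  have e1 : rTensor Y2 b (lTensor X2 i x') = 0 := by
    rw [← hx, lr_comm]
  obtain ⟨z, hz⟩ := (rTensor_exact Y2 hab hb _).1 e1
  have e2 : lTensor X1 p z = 0 := by
    apply h2
    rw [map_zero, ← lr_comm, hz,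
      ← LinearMap.comp_apply, ← lTensor_comp, hip.linearMap_comp_eq_zero]
    simp
  obtain ⟨w, rfl⟩ := (lTensor_exact X1 hip hp _).1 e2
  have e3 : rTensor Y1 a w = x' := by
    apply h1
    rw [← hz, lr_comm]
  rw [← e3]
  exact (rTensor_exact Y1 hab hb _).2 ⟨w, rfl⟩

theorem lr (X : Type) [AddCommGroup X] [Module A X] (i : Y1 →ₗ[A] Y2) :
    Injective (lTensor X i) ↔ Injective (rTensor X i) := by
  rw [lTensor_inj_iff_rTensor_inj]

/-- symmetric snake -/
theorem snake' (a : X1 →ₗ[A] X2) (b : X2 →ₗ[A] X3) (hab : Exact a b) (hb : Surjective b)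
    (i : Y1 →ₗ[A] Y2) (p : Y2 →ₗ[A] Y3) (hip : Exact i p) (hp : Surjective p)
    (h1 : Injective (rTensor Y2 a)) (h2 : Injective (lTensor X3 i)) :
    Injective (rTensor Y3 a) := by
  exact (lr _ _).1 (snake i p hip hp a b hab hb ((lr _ _).2 h1) ((lr _ _).1 h2))

/-- extension -/
theorem ext_inj [Module.Flat A Y2]
    (a : X1 →ₗ[A] X2) (b : X2 →ₗ[A] X3) (ha : Injective a) (hab : Exact a b) (hb : Surjective b)
    (i : Y1 →ₗ[A] Y2) (h1 : Injective (lTensor X1 i)) (h3 : Injective (lTensor X3 i)) :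
    Injective (lTensor X2 i) := by
  rw [injective_iff_map_eq_zero]
  intro x hx
  have e1 : rTensor Y1 b x = 0 := by
    apply h3
    rw [map_zero, lr_comm, hx, map_zero]
  obtain ⟨y, rfl⟩ := (rTensor_exact Y1 hab hb _).1 e1
  have : y = 0 := by
    apply h1
    apply Module.Flat.rTensor_preserves_injective_linearMap (M := Y2) a ha
    rw [map_zero, map_zero, ← lr_comm, hx]
  simp [this]

theorem sub_inj [Module.Flat A Y2] (a : X1 →ₗ[A] X2) (ha : Injective a)
    (i : Y1 →ₗ[A] Y2) (h1 : Injective (lTensor X1 i)) : Injective (rTensor Y1 a) := by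
  have : Injective ((lTensor X2 i) ∘ₗ (rTensor Y1 a)) := by
    rw [lTensor_comp_rTensor, ← rTensor_comp_lTensor]
    exact (Module.Flat.rTensor_preserves_injective_linearMap (M := Y2) a ha).comp h1
  exact Injective.of_comp (f := lTensor X2 i) (by rwa [LinearMap.coe_comp] at this)

theorem sub_inj' [Module.Flat A Y2] (a : X1 →ₗ[A] X2)
    (i : Y1 →ₗ[A] Y2) (h2 : Injective (lTensor X2 i)) (h1 : Injective (rTensor Y1 a)) :
    Injective (lTensor X1 i) := by
  have : Injective ((rTensor Y2 a) ∘ₗ (lTensor X1 i)) := by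
    rw [rTensor_comp_lTensor, ← lTensor_comp_rTensor]
    exact h2.comp h1
  exact Injective.of_comp (f := rTensor Y2 a) (by rwa [LinearMap.coe_comp] at this)

theorem flat_tors [Module.Flat A Y2] (f : A) (y : Y2) (h : f • y = 0) :
    y ∈ Submodule.torsionBy A A f • (⊤ : Submodule A Y2) := by
  have := Module.Flat.isTrivialRelation_of_sum_smul_eq_zero (ι := Unit) (f := fun _ => f)
    (x := fun _ => y) (by simpa using h)
  obtain ⟨k, a, z, h1, h2⟩ := this
  have h1 := h1 ()
  simp only at h1
  rw [h1]
  refine Submodule.sum_mem _ fun j _ => Submodule.smul_mem_smul ?_ trivial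
  rw [Submodule.mem_torsionBy_iff]
  simpa using h2 j

theorem one_tmul_eq_zero (f : A) (r : Y1) :
    ((1 : A ⧸ Ideal.span {f}) ⊗ₜ[A] r = 0) ↔ ∃ s, r = f • s := by
  rw [← (TensorProduct.quotTensorEquivQuotSMul Y1 (Ideal.span {f})).map_eq_zero_iff]
  have := TensorProduct.quotTensorEquivQuotSMul_mk_tmul (M := Y1) (Ideal.span {f}) 1 r
  rw [map_one] at this
  rw [this, one_smul, Submodule.Quotient.mk_eq_zero, Submodule.ideal_span_singleton_smul,
    Submodule.mem_smul_pointwise_iff_exists]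
  simp [eq_comm]

theorem tors_of_inj [Module.Flat A Y2] (f : A)
    (i : Y1 →ₗ[A] Y2) (p : Y2 →ₗ[A] Y3) (hip : Exact i p) (hp : Surjective p)
    (h : Injective (lTensor (A ⧸ Ideal.span {f}) i)) (y : Y3) (hy : f • y = 0) :
    y ∈ Submodule.torsionBy A A f • (⊤ : Submodule A Y3) := by
  obtain ⟨z, rfl⟩ := hp y
  obtain ⟨r, hr⟩ := (hip (f • z)).1 (by simpa using hy)
  have : (1 : A ⧸ Ideal.span {f}) ⊗ₜ[A] r = 0 := by
    apply h
    rw [lTensor_tmul, hr, map_zero, one_tmul_eq_zero]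
    exact ⟨z, rfl⟩
  obtain ⟨s, rfl⟩ := (one_tmul_eq_zero f r).1 this
  have h2 := flat_tors f (z - i s) (by rw [smul_sub, ← hr]; simp)
  have h3 := Submodule.mem_map_of_mem (f := p) h2
  rw [Submodule.map_smul'', map_sub, hip.apply_apply_eq_zero, sub_zero] at h3
  exact Submodule.smul_mono le_rfl le_top h3

theorem inj_of_tors (f : A)
    (i : Y1 →ₗ[A] Y2) (p : Y2 →ₗ[A] Y3) (hi : Injective i) (hip : Exact i p) (hp : Surjective p)
    (h : ∀ y : Y3, f • y = 0 → y ∈ Submodule.torsionBy A A f • (⊤ : Submodule A Y3)) :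
    Injective (lTensor (A ⧸ Ideal.span {f}) i) := by
  rw [injective_iff_map_eq_zero]
  intro x hx
  obtain ⟨r, rfl⟩ : ∃ r : Y1, (1 : A ⧸ Ideal.span {f}) ⊗ₜ[A] r = x := by
    clear hx
    induction x using TensorProduct.induction_on with
    | zero => exact ⟨0, by simp⟩
    | tmul a r =>
      obtain ⟨a, rfl⟩ := Ideal.Quotient.mk_surjective a
      refine ⟨a • r, ?_⟩
      rw [← TensorProduct.smul_tmul]
      congr 1
      rw [Algebra.smul_def, mul_one]; rfl
    | add x y hx' hy' =>
      obtain ⟨r, rfl⟩ := hx'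
      obtain ⟨s, rfl⟩ := hy'
      exact ⟨_, by rw [TensorProduct.tmul_add]⟩
  rw [lTensor_tmul, one_tmul_eq_zero] at hx
  obtain ⟨y, hy⟩ := hx
  have h1 := h (p y) (by rw [← map_smul, ← hy, hip.apply_apply_eq_zero])
  have h4 : (⊤ : Submodule A Y3) = Submodule.map p ⊤ := by
    rw [Submodule.map_top, LinearMap.range_eq_top.2 hp]
  rw [h4, ← Submodule.map_smul''] at h1
  obtain ⟨k, hk, hkp⟩ := h1
  have hfk : f • k = 0 := by
    refine Submodule.smul_induction_on hk ?_ ?_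
    · intro r hr n _
      rw [Submodule.mem_torsionBy_iff] at hr
      rw [← smul_assoc, hr, zero_smul]
    · intro x y hx hy
      rw [smul_add, hx, hy, add_zero]
  obtain ⟨s, hs⟩ := (hip (y - k)).1 (by rw [map_sub, hkp, sub_self])
  rw [one_tmul_eq_zero]
  refine ⟨s, hi ?_⟩
  rw [hy, map_smul, hs, smul_sub, hfk, sub_zero]

theorem tors_inj [Module.Flat A Y2] (g : A) (i : Y1 →ₗ[A] Y2)
    (h1 : ∀ (N : Type) [AddCommGroup N] [Module A N], (∀ x : N, g • x = 0) →
      Injective (lTensor N i)) (n : ℕ) :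
    ∀ (N : Type) [AddCommGroup N] [Module A N], (∀ x : N, g ^ n • x = 0) →
      Injective (lTensor N i) := by
  induction n with
  | zero =>
    intro N _ _ hN
    exact h1 N (fun x => by have := hN x; rw [pow_zero, one_smul] at this; simp [this])
  | succ n ih =>
    intro N _ _ hN
    let K := Submodule.torsionBy A N g
    refine ext_inj K.subtype K.mkQ K.injective_subtype
      (LinearMap.exact_subtype_mkQ K) K.mkQ_surjective i (h1 K ?_) (ih (N ⧸ K) ?_)
    · rintro ⟨x, hx⟩
      ext
      simpa [K] using hx
    · intro x
      obtain ⟨x, rfl⟩ := K.mkQ_surjective x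
      rw [← map_smul, Submodule.mkQ_apply, Submodule.Quotient.mk_eq_zero, Submodule.mem_torsionBy_iff,
        ← mul_smul, ← pow_succ', hN]

theorem tors_inj' [Module.Flat A Y2] (g : A) (i : Y1 →ₗ[A] Y2)
    (h1 : ∀ (N : Type) [AddCommGroup N] [Module A N], (∀ x : N, g • x = 0) →
      Injective (lTensor N i)) 
    (N : Type) [AddCommGroup N] [Module A N] (hN : ∀ x : N, ∃ n : ℕ, g ^ n • x = 0) :
      Injective (lTensor N i) := by
  rw [injective_iff_map_eq_zero]
  intro x hx
  have mono : ∀ n m : ℕ, n ≤ m → range (rTensor Y1 (Submodule.torsionBy A N (g ^ n)).subtype) ≤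
      range (rTensor Y1 (Submodule.torsionBy A N (g ^ m)).subtype) := by
    intro n m hnm
    have hle : Submodule.torsionBy A N (g ^ n) ≤ Submodule.torsionBy A N (g ^ m) :=
      Submodule.torsionBy_le_torsionBy_of_dvd _ _ (pow_dvd_pow _ hnm)
    rw [← Submodule.subtype_comp_inclusion _ _ hle, rTensor_comp]
    exact LinearMap.range_comp_le_range _ _
  obtain ⟨n, y, rfl⟩ : ∃ n : ℕ,
      x ∈ range (rTensor Y1 (Submodule.torsionBy A N (g ^ n)).subtype) := by
    clear hx
    induction x using TensorProduct.induction_on with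
    | zero => exact ⟨0, Submodule.zero_mem _⟩
    | tmul a r =>
      obtain ⟨n, hn⟩ := hN a
      exact ⟨n, ⟨(⟨a, hn⟩ : Submodule.torsionBy A N (g ^ n)) ⊗ₜ r, by simp⟩⟩
    | add x y hx hy =>
      obtain ⟨n, hn⟩ := hx
      obtain ⟨m, hm⟩ := hy
      exact ⟨max n m, Submodule.add_mem _ (mono _ _ (le_max_left _ _) hn)
        (mono _ _ (le_max_right _ _) hm)⟩
  have hy : y = 0 := by
    apply tors_inj g i h1 n (Submodule.torsionBy A N (g ^ n)) (by
      rintro ⟨x, hx⟩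
      ext
      simpa using hx)
    apply Module.Flat.rTensor_preserves_injective_linearMap (M := Y2) _
      (Submodule.injective_subtype _)
    rw [map_zero, map_zero, ← lr_comm, hx]
  rw [hy, map_zero]

end gen

section bc
variable {C : Type} [CommRing C] (B : Type) [CommRing B] [Algebra C B]

theorem bc1 {X Y : Type} [AddCommGroup X] [AddCommGroup Y] [Module C X] [Module C Y]
    (u : X →ₗ[C] Y) (hu : Injective (lTensor B u)) (N : Type) [AddCommGroup N] [Module C N]
    [Module B N] [IsScalarTower C B N] [Module.Flat B N] : Injective (lTensor N u) := by
  let e1 := AlgebraTensorModule.cancelBaseChange C B B N X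
  let e2 := AlgebraTensorModule.cancelBaseChange C B B N Y
  have h1 : Injective (lTensor N (u.baseChange B)) :=
    Module.Flat.lTensor_preserves_injective_linearMap (M := N) (u.baseChange B) hu
  have h2 : ∀ x, lTensor N u x = e2 (lTensor N (u.baseChange B) (e1.symm x)) := by
    intro x
    induction x using TensorProduct.induction_on with
    | zero => simp
    | tmul a r => simp [e1, e2]
    | add x y hx hy => simp only [map_add, hx, hy]
  have h3 : ⇑(lTensor N u) = e2 ∘ lTensor N (u.baseChange B) ∘ e1.symm := funext h2
  rw [h3]
  exact e2.injective.comp (h1.comp e1.symm.injective)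

theorem bc2 (M : Type) [AddCommGroup M] [Module C M] [Module.Flat B (B ⊗[C] M)]
    {K L : Type} [AddCommGroup K] [AddCommGroup L] [Module C K] [Module C L] [Module B K]
    [Module B L] [IsScalarTower C B K] [IsScalarTower C B L] (u : K →ₗ[B] L) (hu : Injective u) :
    Injective (rTensor M (u.restrictScalars C)) := by
  let e1 := AlgebraTensorModule.cancelBaseChange C B B K M
  let e2 := AlgebraTensorModule.cancelBaseChange C B B L M
  have h1 : Injective (rTensor (B ⊗[C] M) u) :=
    Module.Flat.rTensor_preserves_injective_linearMap _ hu
  have h2 : ∀ x, rTensor M (u.restrictScalars C) x = e2 (rTensor (B ⊗[C] M) u (e1.symm x)) := by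
    intro x
    induction x using TensorProduct.induction_on with
    | zero => simp
    | tmul a r => simp [e1, e2]
    | add x y hx hy => simp only [map_add, hx, hy]
  have h3 : ⇑(rTensor M (u.restrictScalars C)) = e2 ∘ rTensor (B ⊗[C] M) u ∘ e1.symm := funext h2
  rw [h3]
  exact e2.injective.comp (h1.comp e1.symm.injective)

theorem bc3aux {R F M : Type} [AddCommGroup R] [AddCommGroup F] [AddCommGroup M] [Module C R]
    [Module C F] [Module C M] (i : R →ₗ[C] F) (p : F →ₗ[C] M) (hip : Exact i p)
    (hp : Surjective p) (hB : Injective (lTensor B i))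
    (N : Type) [AddCommGroup N] [Module C N]
    [Module B N] [IsScalarTower C B N] (L : Type) [AddCommGroup L] [Module C L]
    [Module B L] [IsScalarTower C B L] [Module.Flat B L] (q : L →ₗ[B] N) (hq : Surjective q)
    (hM : Injective (rTensor M ((ker q).subtype.restrictScalars C))) : Injective (lTensor N i) := by
  have h1 : Injective (lTensor L i) := bc1 B i hB _
  have h3 : Exact ((ker q).subtype.restrictScalars C) (q.restrictScalars C) :=
    LinearMap.exact_subtype_ker_map q
  exact snake _ (q.restrictScalars C) h3 hq i p hip hp h1 hM

/-- `F → M` with kernel `R`; then all B-modules are fine. -/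
theorem bc3 {R F M : Type} [AddCommGroup R] [AddCommGroup F] [AddCommGroup M] [Module C R]
    [Module C F] [Module C M] (i : R →ₗ[C] F) (p : F →ₗ[C] M) (hip : Exact i p)
    (hp : Surjective p) (hB : Injective (lTensor B i))
    (hM : ∀ {K L : Type} [AddCommGroup K] [AddCommGroup L] [Module C K] [Module C L] [Module B K]
    [Module B L] [IsScalarTower C B K] [IsScalarTower C B L] (u : K →ₗ[B] L), Injective u →
      Injective (rTensor M (u.restrictScalars C)))
    (N : Type) [AddCommGroup N] [Module C N]
    [Module B N] [IsScalarTower C B N] : Injective (lTensor N i) :=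
  bc3aux B i p hip hp hB N (N →₀ B) (Finsupp.linearCombination B id)
    (Finsupp.linearCombination_id_surjective B N) (hM _ (Submodule.injective_subtype _))
end bc

/-- everything over `C` -/
theorem main {C : Type} [CommRing C] (g : C) {R' F' R F M : Type} [AddCommGroup R']
    [AddCommGroup F'] [AddCommGroup R] [AddCommGroup F] [AddCommGroup M] [Module C R'] [Module C F']
    [Module C R] [Module C F] [Module C M] [Module.Flat C F] [Module.Flat C F']
    (i : R →ₗ[C] F) (p : F →ₗ[C] M) (hi : Injective i) (hip : Exact i p) (hp : Surjective p)
    (j : R' →ₗ[C] F') (q : F' →ₗ[C] R) (hjq : Exact j q) (hq : Surjective q)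
    (h1 : Injective (lTensor (C ⧸ Ideal.span {g}) i))
    (h2 : Injective (lTensor (C ⧸ Ideal.span {g}) j))
    [Module.Flat (C ⧸ Ideal.span {g}) ((C ⧸ Ideal.span {g}) ⊗[C] M)]
    [Module.Flat (Localization (Submonoid.powers g)) (Localization (Submonoid.powers g) ⊗[C] M)] :
    Module.Flat C M := by
  have P1 : ∀ (N : Type) [AddCommGroup N] [Module C N] [Module (C ⧸ Ideal.span {g}) N]
      [IsScalarTower C (C ⧸ Ideal.span {g}) N], Injective (lTensor N i) := by
    intro N _ _ _ _
    exact bc3 (C ⧸ Ideal.span {g}) i p hip hp h1 (fun u hu => bc2 _ M u hu) N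
  have Q1 : ∀ (N : Type) [AddCommGroup N] [Module C N] [Module (C ⧸ Ideal.span {g}) N]
      [IsScalarTower C (C ⧸ Ideal.span {g}) N], Injective (lTensor N j) := by
    intro N _ _ _ _
    exact bc3 (C ⧸ Ideal.span {g}) j q hjq hq h2
      (fun {K L} _ _ _ _ _ _ _ _ u hu => sub_inj (u.restrictScalars C) hu i (P1 K)) N
  have mod : ∀ (N : Type) [AddCommGroup N] [Module C N], (∀ x : N, g • x = 0) →
      Module.IsTorsionBySet C N (Ideal.span {g} : Ideal C) := by
    intro N _ _ h
    rw [Module.isTorsionBySet_span_singleton_iff]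
    exact h
  have P2 : ∀ (N : Type) [AddCommGroup N] [Module C N] (_ : ∀ x : N, ∃ n : ℕ, g ^ n • x = 0),
      Injective (lTensor N i) := by
    refine tors_inj' g i ?_
    intro N _ _ hN
    let _ := (mod N hN).module
    have : IsScalarTower C (C ⧸ Ideal.span {g}) N := (mod N hN).isScalarTower
    exact P1 N
  have Q2 : ∀ (N : Type) [AddCommGroup N] [Module C N] (_ : ∀ x : N, ∃ n : ℕ, g ^ n • x = 0),
      Injective (lTensor N j) := by
    refine tors_inj' g j ?_
    intro N _ _ hN
    let _ := (mod N hN).module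
    have : IsScalarTower C (C ⧸ Ideal.span {g}) N := (mod N hN).isScalarTower
    exact Q1 N
  have P3 : ∀ (N : Type) [AddCommGroup N] [Module C N] [Module (Localization (Submonoid.powers g)) N]
      [IsScalarTower C (Localization (Submonoid.powers g)) N], Injective (lTensor N i) := by
    intro N _ _ _ _
    have : Module.Flat C (Localization (Submonoid.powers g)) :=
      IsLocalization.flat _ (Submonoid.powers g)
    exact bc3 (Localization (Submonoid.powers g)) i p hip hp
      (Module.Flat.lTensor_preserves_injective_linearMap _ hi) (fun u hu => bc2 _ M u hu) N
  have P4 : ∀ (N : Type) [AddCommGroup N] [Module C N], Injective (lTensor N i) := by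
    intro N _ _
    let l := LocalizedModule.mkLinearMap (Submonoid.powers g) N
    refine ext_inj (ker l).subtype l.rangeRestrict (Submodule.injective_subtype _) ?_
      (surjective_rangeRestrict l) i (P2 _ ?_) ?_
    · rw [LinearMap.exact_iff, ker_rangeRestrict, Submodule.range_subtype]
    · rintro ⟨x, hx⟩
      obtain ⟨⟨_, n, rfl⟩, h⟩ := (IsLocalizedModule.eq_zero_iff (Submonoid.powers g) l).1 hx
      exact ⟨n, Subtype.ext h⟩
    · refine sub_inj' (range l).subtype i (P3 _) ?_
      refine snake' (range l).subtype (range l).mkQ (LinearMap.exact_subtype_mkQ _)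
        (Submodule.mkQ_surjective _) j q hjq hq
        (Module.Flat.rTensor_preserves_injective_linearMap _ (Submodule.injective_subtype _))
        (Q2 _ ?_)
      intro x
      obtain ⟨x, rfl⟩ := Submodule.mkQ_surjective _ x
      obtain ⟨⟨m, ⟨_, n, rfl⟩⟩, h⟩ := IsLocalizedModule.surj (Submonoid.powers g) l x
      refine ⟨n, ?_⟩
      rw [← map_smul, Submodule.mkQ_apply, Submodule.Quotient.mk_eq_zero]
      exact ⟨m, h.symm⟩
  rw [Module.Flat.iff_rTensor_preserves_injective_linearMap]
  intro X Y _ _ _ _ a ha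
  refine snake' a (range a).mkQ ?_ (Submodule.mkQ_surjective _) i p hip hp
    (Module.Flat.rTensor_preserves_injective_linearMap _ ha) (P4 _)
  rw [LinearMap.exact_iff, Submodule.ker_mkQ]

end FlatGlue
namespace FlatGlue
open TensorProduct Function LinearMap

theorem exists_pres (A M : Type) [CommRing A] [AddCommGroup M] [Module A M] :
    ∃ (F : Type) (_ : AddCommGroup F) (_ : Module A F) (_ : Module.Flat A F) (p : F →ₗ[A] M),
      Surjective p :=
  ⟨M →₀ A, inferInstance, inferInstance, inferInstance, Finsupp.linearCombination A id,
    Finsupp.linearCombination_id_surjective A M⟩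

section res
variable {A : Type} [CommRing A]

theorem res1 {P2 P1 P0 M : Type} [AddCommGroup P2] [AddCommGroup P1] [AddCommGroup P0]
    [AddCommGroup M] [Module A P2] [Module A P1] [Module A P0] [Module A M]
    (d2 : P2 →ₗ[A] P1) (d1 : P1 →ₗ[A] P0) (h : Exact d2 d1)
    (hM : Exact (lTensor M d2) (lTensor M d1)) :
    Injective (rTensor M (range d1).subtype) := by
  rw [← lr, injective_iff_map_eq_zero]
  intro x hx
  obtain ⟨y, rfl⟩ := lTensor_surjective M (surjective_rangeRestrict d1) x
  rw [← LinearMap.comp_apply, ← lTensor_comp] at hx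
  obtain ⟨w, rfl⟩ := (hM y).1 hx
  have : d1.rangeRestrict ∘ₗ d2 = 0 := by
    ext x
    simpa using h.apply_apply_eq_zero x
  rw [← LinearMap.comp_apply, ← lTensor_comp, this]
  simp

theorem res_tors1 (f : A) {P2 P1 P0 M : Type} [AddCommGroup P2] [AddCommGroup P1] [AddCommGroup P0]
    [AddCommGroup M] [Module A P2] [Module A P1] [Module A P0] [Module A M] [Module.Flat A P0]
    (d2 : P2 →ₗ[A] P1) (d1 : P1 →ₗ[A] P0) (e : P0 →ₗ[A] (A ⧸ Ideal.span {f}))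
    (h : Exact d2 d1) (he : Exact d1 e) (hes : Surjective e)
    (hM : Exact (lTensor M d2) (lTensor M d1)) (y : M) (hy : f • y = 0) :
    y ∈ Submodule.torsionBy A A f • (⊤ : Submodule A M) := by
  obtain ⟨F, _, _, _, p, hp⟩ := exists_pres A M
  have hip : Exact (ker p).subtype p := LinearMap.exact_subtype_ker_map p
  refine tors_of_inj f _ p hip hp ?_ y hy
  refine snake (range d1).subtype e ?_ hes _ p hip hp
    (Module.Flat.lTensor_preserves_injective_linearMap _ (Submodule.injective_subtype _))
    (res1 d2 d1 h hM)
  rw [LinearMap.exact_iff, Submodule.range_subtype]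
  exact LinearMap.exact_iff.1 he

/-- multiplication `I ⊗ M → M`. -/
noncomputable def mu (I : Ideal A) (M : Type) [AddCommGroup M] [Module A M] : I ⊗[A] M →ₗ[A] M :=
  TensorProduct.lift ((LinearMap.lsmul A M).comp I.subtype)

theorem mu_tmul (I : Ideal A) (M : Type) [AddCommGroup M] [Module A M] (a : I) (m : M) :
    mu I M (a ⊗ₜ m) = (a : A) • m := rfl

theorem mu_comm (I : Ideal A) {M N : Type} [AddCommGroup M] [Module A M] [AddCommGroup N]
    [Module A N] (u : M →ₗ[A] N) (x : I ⊗[A] M) : mu I N (lTensor I u x) = u (mu I M x) := by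
  induction x using TensorProduct.induction_on with
  | zero => simp
  | tmul a r => simp [mu_tmul]
  | add x y hx hy => simp only [map_add, hx, hy]

theorem mu_range (I : Ideal A) (M : Type) [AddCommGroup M] [Module A M] :
    range (mu I M) = I • ⊤ := by
  apply le_antisymm
  · rintro _ ⟨x, rfl⟩
    induction x using TensorProduct.induction_on with
    | zero => simp
    | tmul a r => exact Submodule.smul_mem_smul a.2 trivial
    | add x y hx hy => rw [map_add]; exact add_mem hx hy
  · rw [Submodule.smul_le]
    intro r hr n _
    exact ⟨(⟨r, hr⟩ : I) ⊗ₜ n, rfl⟩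

theorem mu_inj (I : Ideal A) (M : Type) [AddCommGroup M] [Module A M] [Module.Flat A M] :
    Injective (mu I M) := by
  have h := Module.Flat.rTensor_preserves_injective_linearMap (M := M) I.subtype
    (Submodule.injective_subtype _)
  have h2 : ∀ x, mu I M x = TensorProduct.lid A M (rTensor M I.subtype x) := by
    intro x
    induction x using TensorProduct.induction_on with
    | zero => simp
    | tmul a r => simp [mu_tmul]
    | add x y hx hy => simp only [map_add, hx, hy]
  rw [show ⇑(mu I M) = TensorProduct.lid A M ∘ rTensor M I.subtype from funext h2]
  exact (TensorProduct.lid A M).injective.comp h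

theorem res_tors2 (f : A) {P3 P2 P1 P0 M : Type} [AddCommGroup P3] [AddCommGroup P2]
    [AddCommGroup P1] [AddCommGroup P0]
    [AddCommGroup M] [Module A P3] [Module A P2] [Module A P1] [Module A P0] [Module A M]
    [Module.Flat A P0] [Module.Flat A P1]
    (d3 : P3 →ₗ[A] P2) (d2 : P2 →ₗ[A] P1) (d1 : P1 →ₗ[A] P0) (e : P0 →ₗ[A] (A ⧸ Ideal.span {f}))
    (h3 : Exact d3 d2) (h : Exact d2 d1) (he : Exact d1 e) (hes : Surjective e)
    (hM3 : Exact (lTensor M d3) (lTensor M d2)) :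
    Injective (mu (Submodule.torsionBy A A f) M) := by
  obtain ⟨F, _, _, _, p, hp⟩ := exists_pres A M
  have hip : Exact (ker p).subtype p := LinearMap.exact_subtype_ker_map p
  obtain ⟨F', _, _, _, q, hq⟩ := exists_pres A (ker p)
  have hjq : Exact (ker q).subtype q := LinearMap.exact_subtype_ker_map q
  have k1 : Injective (lTensor (range d1) (ker p).subtype) := by
    refine snake (range d2).subtype d1.rangeRestrict ?_ (surjective_rangeRestrict d1) _ p hip hp
      (Module.Flat.lTensor_preserves_injective_linearMap _ (Submodule.injective_subtype _))
      (res1 d3 d2 h3 hM3)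
    rw [LinearMap.exact_iff, Submodule.range_subtype, ker_rangeRestrict]
    exact LinearMap.exact_iff.1 h
  have k2 : Injective (rTensor (ker p) (range d1).subtype) :=
    sub_inj _ (Submodule.injective_subtype _) _ k1
  have k3 : Injective (lTensor (A ⧸ Ideal.span {f}) (ker q).subtype) := by
    refine snake (range d1).subtype e ?_ hes _ q hjq hq
      (Module.Flat.lTensor_preserves_injective_linearMap _ (Submodule.injective_subtype _)) k2
    rw [LinearMap.exact_iff, Submodule.range_subtype]
    exact LinearMap.exact_iff.1 he
  have k4 := tors_of_inj f _ q hjq hq k3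
  rw [injective_iff_map_eq_zero]
  intro x hx
  obtain ⟨y, rfl⟩ := lTensor_surjective _ hp x
  rw [mu_comm] at hx
  have k5 := k4 ⟨_, hx⟩ (by
    have : Submodule.torsionBy A A f • (⊤ : Submodule A F) ≤ Submodule.torsionBy A F f := by
      rw [Submodule.smul_le]
      intro r hr n _
      rw [Submodule.mem_torsionBy_iff] at hr ⊢
      rw [← smul_assoc, hr, zero_smul]
    have h2 := this ((mu_range _ F).le ⟨y, rfl⟩)
    exact Subtype.ext h2)
  rw [← mu_range] at k5
  obtain ⟨w, hw⟩ := k5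
  have k6 : lTensor _ (ker p).subtype w = y := by
    apply mu_inj _ F
    rw [mu_comm, hw]
    rfl
  rw [← k6]
  exact (lTensor_exact _ hip hp _).2 ⟨w, rfl⟩

open CategoryTheory

theorem tor_exact (M : Type) [AddCommGroup M] [Module A M] (N : ModuleCat.{0} A)
    (P : ProjectiveResolution N) (n : ℕ)
    (h : Limits.IsZero ((((Tor (ModuleCat A) (n + 1)).obj (ModuleCat.of A M)).obj N))) :
    Exact (lTensor M (P.complex.d (n + 2) (n + 1)).hom)
      (lTensor M (P.complex.d (n + 1) n).hom) := by
  have h1 := h.of_iso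
    (P.isoLeftDerivedObj ((MonoidalCategory.tensoringLeft (ModuleCat A)).obj (ModuleCat.of A M))
      (n + 1)).symm
  have h2 := (HomologicalComplex.exactAt_iff_isZero_homology _ _).2 h1
  rw [HomologicalComplex.exactAt_iff' _ (n + 2) (n + 1) n (by simp) (by simp)] at h2
  rw [ShortComplex.ShortExact.moduleCat_exact_iff_function_exact] at h2
  exact h2

theorem res_exact (N : ModuleCat.{0} A) (P : ProjectiveResolution N) (n : ℕ) :
    Exact (P.complex.d (n + 2) (n + 1)).hom (P.complex.d (n + 1) n).hom := by
  have := P.exact_succ n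
  rw [ShortComplex.ShortExact.moduleCat_exact_iff_function_exact] at this
  exact this

theorem res_exact0 (N : ModuleCat.{0} A) (P : ProjectiveResolution N) :
    Exact (P.complex.d 1 0).hom (P.π.f 0).hom := by
  have := P.exact₀
  rw [ShortComplex.ShortExact.moduleCat_exact_iff_function_exact] at this
  exact this

theorem res_surj (N : ModuleCat.{0} A) (P : ProjectiveResolution N) :
    Surjective (P.π.f 0).hom := by
  have : Epi (P.π.f 0) := inferInstance
  rwa [ModuleCat.epi_iff_surjective] at this

theorem res_flat (N : ModuleCat.{0} A) (P : ProjectiveResolution N) (n : ℕ) :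
    Module.Flat A (P.complex.X n) := by
  have : Projective (P.complex.X n) := P.projective n
  have := (IsProjective.iff_projective (R := A) (P.complex.X n)).2 this
  infer_instance

theorem tor1 (f : A) (M : Type) [AddCommGroup M] [Module A M]
    (h : Limits.IsZero ((((Tor (ModuleCat A) 1).obj (ModuleCat.of A M)).obj
        (ModuleCat.of A (A ⧸ Ideal.span {f}))))) (y : M) (hy : f • y = 0) :
    y ∈ Submodule.torsionBy A A f • (⊤ : Submodule A M) := by
  let P := projectiveResolution (ModuleCat.of A (A ⧸ Ideal.span {f}))
  have := res_flat _ P 0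
  exact res_tors1 f _ _ _ (res_exact _ P 0) (res_exact0 _ P) (res_surj _ P)
    (tor_exact M _ P 0 h) y hy

theorem tor2 (f : A) (M : Type) [AddCommGroup M] [Module A M]
    (h : Limits.IsZero ((((Tor (ModuleCat A) 2).obj (ModuleCat.of A M)).obj
        (ModuleCat.of A (A ⧸ Ideal.span {f}))))) :
    Injective (mu (Submodule.torsionBy A A f) M) := by
  let P := projectiveResolution (ModuleCat.of A (A ⧸ Ideal.span {f}))
  have := res_flat _ P 0
  have := res_flat _ P 1
  exact res_tors2 f _ _ _ _ (res_exact _ P 1) (res_exact _ P 0) (res_exact0 _ P) (res_surj _ P)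
    (tor_exact M _ P 1 h)

end res

section final
variable {A C : Type} [CommRing A] [CommRing C] [Algebra A C] (f : A)

theorem le1 (M : Type) [AddCommGroup M] [Module C M] [Module A M] [IsScalarTower A C M] (y : M)
    (h : y ∈ Submodule.torsionBy A A f • (⊤ : Submodule A M)) :
    y ∈ Submodule.torsionBy C C (algebraMap A C f) • (⊤ : Submodule C M) := by
  refine Submodule.smul_induction_on h ?_ ?_
  · intro r hr n _
    rw [← algebraMap_smul C r n]
    refine Submodule.smul_mem_smul ?_ trivial
    rw [Submodule.mem_torsionBy_iff] at hr ⊢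
    rw [smul_eq_mul] at *
    rw [← map_mul, hr, map_zero]
  · intro x y hx hy
    exact add_mem hx hy

theorem le2 (hC : ∀ c : C, f • c = 0 → c ∈ Submodule.torsionBy A A f • (⊤ : Submodule A C))
    (M : Type) [AddCommGroup M] [Module C M] [Module A M] [IsScalarTower A C M] (y : M)
    (h : y ∈ Submodule.torsionBy C C (algebraMap A C f) • (⊤ : Submodule C M)) :
    y ∈ Submodule.torsionBy A A f • (⊤ : Submodule A M) := by
  refine Submodule.smul_induction_on h ?_ ?_
  · intro r hr n _
    rw [Submodule.mem_torsionBy_iff, algebraMap_smul] at hr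
    refine Submodule.smul_induction_on (hC r hr) ?_ ?_
    · intro a ha c _
      rw [smul_assoc]
      exact Submodule.smul_mem_smul ha trivial
    · intro x y hx hy
      rw [add_smul]
      exact add_mem hx hy
  · intro x y hx hy
    exact add_mem hx hy

theorem final (M : Type) [AddCommGroup M] [Module C M] [Module A M] [IsScalarTower A C M]
    (ha : Module.Flat (Localization (Submonoid.powers (algebraMap A C f)))
        (LocalizedModule (Submonoid.powers (algebraMap A C f)) M))
    (hb : Module.Flat (C ⧸ Ideal.span {algebraMap A C f})
        (M ⧸ (Ideal.span {algebraMap A C f} • ⊤ : Submodule C M)))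
    (hC : ∀ c : C, f • c = 0 → c ∈ Submodule.torsionBy A A f • (⊤ : Submodule A C))
    (hM : ∀ c : M, f • c = 0 → c ∈ Submodule.torsionBy A A f • (⊤ : Submodule A M))
    (hM2 : Injective (mu (Submodule.torsionBy A A f) M)) : Module.Flat C M := by
  obtain ⟨F, _, _, _, p, hp⟩ := exists_pres C M
  have hip : Exact (ker p).subtype p := LinearMap.exact_subtype_ker_map p
  obtain ⟨F', _, _, _, q, hq⟩ := exists_pres C (ker p)
  have hjq : Exact (ker q).subtype q := LinearMap.exact_subtype_ker_map q
  have i1 : Module.Flat (Localization (Submonoid.powers (algebraMap A C f)))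
      (Localization (Submonoid.powers (algebraMap A C f)) ⊗[C] M) :=
    Module.Flat.of_linearEquiv (LocalizedModule.equivTensorProduct _ M).symm
  have i2 : Module.Flat (C ⧸ Ideal.span {algebraMap A C f})
      ((C ⧸ Ideal.span {algebraMap A C f}) ⊗[C] M) :=
    Module.Flat.of_linearEquiv ((TensorProduct.quotTensorEquivQuotSMul M
      (Ideal.span {algebraMap A C f})).extendScalarsOfSurjective Ideal.Quotient.mk_surjective)
  refine main (algebraMap A C f) (ker p).subtype p (Submodule.injective_subtype _) hip hp
    (ker q).subtype q hjq hq
    (inj_of_tors _ _ p (Submodule.injective_subtype _) hip hp ?_)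
    (inj_of_tors _ _ q (Submodule.injective_subtype _) hjq hq ?_)
  · intro y hy
    rw [algebraMap_smul] at hy
    exact le1 f M y (hM y hy)
  · intro y hy
    let _ : Module A F := Module.compHom F (algebraMap A C)
    have : IsScalarTower A C F := IsScalarTower.of_compHom A C F
    have h1 := flat_tors (algebraMap A C f) (y : F) (by
      have := congrArg Subtype.val hy
      simpa using this)
    have h2 := le2 f hC F _ h1
    rw [← mu_range] at h2
    obtain ⟨x, hx⟩ := h2
    have h3 : lTensor _ (p.restrictScalars A) x = 0 := by
      apply hM2
      rw [mu_comm, hx, map_zero]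
      exact y.2
    have hip' : Exact ((ker p).subtype.restrictScalars A) (p.restrictScalars A) := hip
    obtain ⟨w, hw⟩ := (lTensor_exact _ hip' hp _).1 h3
    apply le1 f (ker p) y
    rw [← mu_range]
    refine ⟨w, Subtype.ext ?_⟩
    rw [← hx, ← hw, mu_comm]
    rfl

end final
end FlatGlue

/-- Let A → C be a homomorphism of commutative rings, f ∈ A, and M a
C-module (also an A-module via A → C). If (a) M[f⁻¹] is flat over C[f⁻¹], (b) M/fM is flat
over C/fC, (c) Tor₁^A(C, A/fA) = 0, and (d) Tor_i^A(M, A/fA) = 0 for i = 1, 2, then M is a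
flat C-module. -/
theorem stmt_0 (A C : Type) [CommRing A] [CommRing C] [Algebra A C]
    (f : A) (M : Type) [AddCommGroup M] [Module C M] [Module A M] [IsScalarTower A C M]
    -- (a) M[f⁻¹] is a flat C[f⁻¹]-module
    (ha : Module.Flat (Localization (Submonoid.powers (algebraMap A C f)))
        (LocalizedModule (Submonoid.powers (algebraMap A C f)) M))
    -- (b) M/fM is a flat C/fC-module
    (hb : Module.Flat (C ⧸ Ideal.span {algebraMap A C f})
        (M ⧸ (Ideal.span {algebraMap A C f} • ⊤ : Submodule C M)))
    -- (c) Tor₁^A(C, A/fA) = 0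
    (hc : Limits.IsZero ((((Tor (ModuleCat A) 1).obj (ModuleCat.of A C)).obj
        (ModuleCat.of A (A ⧸ Ideal.span {f})))))
    -- (d) Tor_i^A(M, A/fA) = 0 for i = 1, 2
    (hd1 : Limits.IsZero ((((Tor (ModuleCat A) 1).obj (ModuleCat.of A M)).obj
        (ModuleCat.of A (A ⧸ Ideal.span {f})))))
    (hd2 : Limits.IsZero ((((Tor (ModuleCat A) 2).obj (ModuleCat.of A M)).obj
        (ModuleCat.of A (A ⧸ Ideal.span {f}))))) :
    Module.Flat C M := by
  exact FlatGlue.final f M ha hb (FlatGlue.tor1 f C hc) (FlatGlue.tor1 f M hd1)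
    (FlatGlue.tor2 f M hd2)
end

section
/- Let A be a commutative ring, f ∈ A, M an A-module, and let A^ := lim_n A/fⁿA be the f-adic completion of A. Then: (i) for every a ∈ A annihilating the localization M_f = M[f⁻¹] and every b ∈ A annihilating M ⊗_A A^, the product ab annihilates M (i.e. Ann_A(M[f⁻¹]) · Ann_A(M ⊗_A A^) ⊆ Ann_A(M)); (ii) if M is finitely generated, fM = M, and every element of M is annihilated by some power of f (i.e. M[f⁻¹] = 0), then M = 0. -/
theorem aux_kill {A : Type} [CommRing A] {f : A} {M : Type} [AddCommGroup M] [Module A M]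
    {n : ℕ} {x : M} (hx : f ^ n • x = 0) {r r' : A}
    (h : Submodule.Quotient.mk (p := (Ideal.span {f} ^ n • ⊤ : Ideal A)) r
      = Submodule.Quotient.mk r') : r • x = r' • x := by
  rw [Submodule.Quotient.eq] at h
  rw [smul_eq_mul, Ideal.mul_top, Ideal.span_singleton_pow, Ideal.mem_span_singleton'] at h
  obtain ⟨c, hc⟩ := h
  rw [← sub_eq_zero, ← sub_smul, ← hc, mul_smul, hx, smul_zero]

theorem aux_ex {A : Type} [CommRing A] {f : A} (s : AdicCompletion (Ideal.span {f}) A) (n : ℕ) :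
    ∃ r : A, ∀ k ≤ n, Submodule.Quotient.mk (p := (Ideal.span {f} ^ k • ⊤ : Ideal A)) r
      = s.val k := by
  obtain ⟨r, hr⟩ := Submodule.Quotient.mk_surjective _ (s.val n)
  refine ⟨r, fun k hk => ?_⟩
  rw [← s.property hk, ← hr]
  rfl

theorem aux_act {A : Type} [CommRing A] (f : A) {M : Type} [AddCommGroup M] [Module A M]
    (a : A) (ha : ∀ m : M, ∃ n : ℕ, f ^ n • a • m = 0) :
    ∃ g : M → AdicCompletion (Ideal.span {f}) A → M, ∀ m s n r, f ^ n • a • m = 0 →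
      Submodule.Quotient.mk (p := (Ideal.span {f} ^ n • ⊤ : Ideal A)) r = s.val n →
      g m s = r • a • m := by
  choose N hN using ha
  choose R hR using fun (s : AdicCompletion (Ideal.span {f}) A) n => aux_ex s n
  refine ⟨fun m s => R s (N m) • a • m, fun m s n r hn hr => ?_⟩
  have h1 := hR s (max n (N m))
  have e1 : R s (N m) • a • m = R s (max n (N m)) • a • m :=
    aux_kill (hN m) ((hR s (N m) _ le_rfl).trans (h1 _ (le_max_right _ _)).symm)
  have e2 : r • a • m = R s (max n (N m)) • a • m :=
    aux_kill hn (hr.trans (h1 _ (le_max_left _ _)).symm)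
  exact e1.trans e2.symm

theorem aux_pow {A : Type} [CommRing A] {f : A} {M : Type} [AddCommGroup M] [Module A M]
    {n k : ℕ} (h : n ≤ k) {x : M} (hx : f ^ n • x = 0) : f ^ k • x = 0 := by
  rw [← Nat.sub_add_cancel h, pow_add, mul_smul, hx, smul_zero]

theorem aux_lin {A : Type} [CommRing A] (f : A) {M : Type} [AddCommGroup M] [Module A M]
    (a : A) (ha : ∀ m : M, ∃ n : ℕ, f ^ n • a • m = 0) :
    ∃ g : TensorProduct A M (AdicCompletion (Ideal.span {f}) A) →ₗ[A] M,
      ∀ m, g (TensorProduct.tmul A m 1) = a • m := by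
  obtain ⟨g, hg⟩ := aux_act f a ha
  refine ⟨TensorProduct.lift (LinearMap.mk₂ A g ?_ ?_ ?_ ?_), ?_⟩
  · intro m m' s
    obtain ⟨n, hn⟩ := ha m
    obtain ⟨n', hn'⟩ := ha m'
    have k := aux_pow (le_max_left n n') hn
    have k' := aux_pow (le_max_right n n') hn'
    obtain ⟨r, hr⟩ := aux_ex s (max n n')
    rw [hg m s _ r k (hr _ le_rfl), hg m' s _ r k' (hr _ le_rfl),
      hg (m + m') s _ r (by rw [smul_add, smul_add, k, k', add_zero]) (hr _ le_rfl),
      smul_add, smul_add]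
  · intro c m s
    obtain ⟨n, hn⟩ := ha m
    obtain ⟨r, hr⟩ := aux_ex s n
    rw [hg m s _ r hn (hr _ le_rfl), hg (c • m) s n r
      (by rw [smul_comm a c, smul_comm _ c, hn, smul_zero]) (hr _ le_rfl),
      smul_comm a c, smul_comm r c]
  · intro m s t
    obtain ⟨n, hn⟩ := ha m
    obtain ⟨r, hr⟩ := aux_ex s n
    obtain ⟨q, hq⟩ := aux_ex t n
    rw [hg m s _ r hn (hr _ le_rfl), hg m t _ q hn (hq _ le_rfl),
      hg m (s + t) n (r + q) hn (by
        rw [Submodule.Quotient.mk_add, hr _ le_rfl, hq _ le_rfl]; rfl), add_smul]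
  · intro c m s
    obtain ⟨n, hn⟩ := ha m
    obtain ⟨r, hr⟩ := aux_ex s n
    rw [hg m s _ r hn (hr _ le_rfl),
      hg m (c • s) n (c • r) hn (by
        rw [Submodule.Quotient.mk_smul, hr _ le_rfl]; rfl), smul_assoc]
  · intro m
    obtain ⟨n, hn⟩ := ha m
    rw [TensorProduct.lift.tmul, LinearMap.mk₂_apply, hg m 1 n 1 hn rfl, one_smul]

/-- Let A be a commutative ring, f ∈ A, M an A-module, and
A^ := lim_n A/fⁿA the f-adic completion of A. Then:
(i) Ann_A(M[f⁻¹]) · Ann_A(M ⊗_A A^) ⊆ Ann_A(M);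
(ii) if M is finitely generated, fM = M, and M[f⁻¹] = 0 (every element of M is killed by a
power of f), then M = 0. -/
theorem stmt_1 (A : Type) [CommRing A] (f : A) (M : Type) [AddCommGroup M] [Module A M] :
    (Module.annihilator A (LocalizedModule (Submonoid.powers f) M) *
        Module.annihilator A (TensorProduct A M (AdicCompletion (Ideal.span {f}) A)) ≤
      Module.annihilator A M)
    ∧ (Module.Finite A M → (Ideal.span {f} • ⊤ : Submodule A M) = ⊤ →
        (∀ m : M, ∃ n : ℕ, f ^ n • m = 0) → Subsingleton M) := by
  refine ⟨?_, ?_⟩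
  · rw [Ideal.mul_le]
    intro a ha b hb
    rw [Module.mem_annihilator] at ha hb ⊢
    obtain ⟨g, hg⟩ := aux_lin f (M := M) a (fun m => by
      have h := ha (LocalizedModule.mk m 1)
      rw [LocalizedModule.smul'_mk, ← LocalizedModule.zero_mk 1, LocalizedModule.mk_eq] at h
      obtain ⟨⟨u, n, rfl⟩, hu⟩ := h
      exact ⟨n, by simpa [Submonoid.smul_def] using hu⟩)
    intro m
    rw [mul_comm, mul_smul, ← hg, ← map_smul, hb, map_zero]
  · intro hfin htop htor
    have key : ∀ S : Finset M, ∃ n : ℕ, ∀ m ∈ S, f ^ n • m = 0 := by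
      choose N hN using htor
      exact fun S => ⟨S.sup N, fun m hm => aux_pow (Finset.le_sup hm) (hN m)⟩
    obtain ⟨S, hS⟩ := hfin.fg_top
    obtain ⟨n, hn⟩ := key S
    have hall : ∀ m : M, f ^ n • m = 0 := by
      intro m
      have hle : Submodule.span A (S : Set M) ≤ LinearMap.ker (LinearMap.lsmul A M (f ^ n)) :=
        Submodule.span_le.2 (fun x hx => hn x hx)
      exact hle (hS ▸ Submodule.mem_top)
    have hsurj : ∀ k : ℕ, ∀ m : M, ∃ y : M, f ^ k • y = m := by
      intro k
      induction k with
      | zero => exact fun m => ⟨m, by simp⟩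
      | succ k ih =>
        intro m
        have hm : m ∈ (Ideal.span {f} • ⊤ : Submodule A M) := by
          rw [htop]; exact Submodule.mem_top
        rw [Submodule.ideal_span_singleton_smul, Submodule.mem_smul_pointwise_iff_exists] at hm
        obtain ⟨y, -, hy⟩ := hm
        obtain ⟨z, hz⟩ := ih y
        exact ⟨z, by rw [pow_succ', mul_smul, hz, hy]⟩
    refine subsingleton_of_forall_eq 0 (fun m => ?_)
    obtain ⟨y, hy⟩ := hsurj n m
    rw [← hy, hall]
end

section
/- Let A be a commutative ring, I ⊆ A an ideal contained in the Jacobson radical of A, and P a finitely generated A-module such that P/IP is a projective A/I-module. Then the following conditions are equivalent: (i) P is a projective A-module; (ii) P is a flat A-module; (iii) P is finitely presented and the natural map I ⊗_A P → P is injective (equivalently, Tor₁^A(P, A/I) = 0); (iv) the natural reduction map Hom_A(P, A) → Hom_{A/I}(P/IP, A/I), sending an A-linear functional φ to the induced functional on P/IP, is surjective. -/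
lemma aux_bij {A : Type} [CommRing A] (I : Ideal A) (hI : I ≤ Ideal.jacobson ⊥)
    {M : Type} [AddCommGroup M] [Module A M] [Module.Finite A M] (g : M →ₗ[A] M)
    (hg : ∀ x, g x - x ∈ (I • ⊤ : Submodule A M)) : Function.Bijective g := by
  apply OrzechProperty.bijective_of_surjective_endomorphism
  rw [← LinearMap.range_eq_top, eq_top_iff]
  apply Submodule.le_of_le_smul_of_le_jacobson_bot Module.Finite.fg_top hI
  intro x _
  have : x = g x - (g x - x) := by abel
  rw [this]
  exact Submodule.sub_mem _ (Submodule.mem_sup_left ⟨x, rfl⟩) (Submodule.mem_sup_right (hg x))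

lemma aux_section {A : Type} [CommRing A] (I : Ideal A)
    {P F : Type} [AddCommGroup P] [Module A P] [AddCommGroup F] [Module A F]
    (hproj : Module.Projective (A ⧸ I) (P ⧸ (I • ⊤ : Submodule A P)))
    (π : F →ₗ[A] P) (hπ : Function.Surjective π) :
    ∃ s : (P ⧸ (I • ⊤ : Submodule A P)) →ₗ[A] (F ⧸ (I • ⊤ : Submodule A F)),
      ∀ (p : P) (f : F), Submodule.Quotient.mk f = s (Submodule.Quotient.mk p) →
        π f - p ∈ (I • ⊤ : Submodule A P) := by
  let q : (F ⧸ (I • ⊤ : Submodule A F)) →ₗ[A] (P ⧸ (I • ⊤ : Submodule A P)) :=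
    Submodule.mapQ _ _ π (Submodule.smul_top_le_comap_smul_top I π)
  let q' := q.extendScalarsOfSurjective (S := A ⧸ I) Ideal.Quotient.mk_surjective
  have hq : Function.Surjective q' := by
    intro y
    obtain ⟨p, rfl⟩ := Submodule.Quotient.mk_surjective _ y
    obtain ⟨f, rfl⟩ := hπ p
    exact ⟨Submodule.Quotient.mk f, rfl⟩
  obtain ⟨s, hs⟩ := Module.projective_lifting_property q' LinearMap.id hq
  refine ⟨s.restrictScalars A, fun p f h => ?_⟩
  rw [← Submodule.Quotient.eq]
  have := LinearMap.congr_fun hs (Submodule.Quotient.mk p)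
  simp only [LinearMap.comp_apply, LinearMap.id_apply] at this
  rw [← this]
  change _ = q' (s.restrictScalars A (Submodule.Quotient.mk p))
  rw [← h]
  rfl

lemma aux_kappa {A : Type} [CommRing A] (I : Ideal A)
    {P : Type} [AddCommGroup P] [Module A P] {n : ℕ}
    (hproj : Module.Projective (A ⧸ I) (P ⧸ (I • ⊤ : Submodule A P)))
    (π : (Fin n → A) →ₗ[A] P) (hπ : Function.Surjective π) :
    ∃ κ : (Fin n → A) →ₗ[A] (Fin n → A), (∀ x, π (κ x) = 0) ∧
      ∀ x, π x = 0 → κ x - x ∈ (I • ⊤ : Submodule A (Fin n → A)) := by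
  obtain ⟨s, hs⟩ := aux_section I hproj π hπ
  obtain ⟨h, hh⟩ := Module.projective_lifting_property
    (I • ⊤ : Submodule A (Fin n → A)).mkQ (s ∘ₗ (I • ⊤ : Submodule A P).mkQ ∘ₗ π)
    (Submodule.mkQ_surjective _)
  have hh' : ∀ x, Submodule.Quotient.mk (h x) = s (Submodule.Quotient.mk (π x)) :=
    fun x => LinearMap.congr_fun hh x
  -- `x - h x ∈ K + IF`
  have key : ∀ x, ∃ k, π k = 0 ∧ k - (x - h x) ∈ (I • ⊤ : Submodule A (Fin n → A)) := by
    intro x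
    have h1 := hs _ _ (hh' x)
    have h2 : (I • ⊤ : Submodule A P) = (I • ⊤ : Submodule A (Fin n → A)).map π := by
      rw [Submodule.map_smul'', Submodule.map_top, LinearMap.range_eq_top.mpr hπ]
    rw [h2] at h1
    obtain ⟨z, hz, hz'⟩ := h1
    refine ⟨x - h x + z, ?_, ?_⟩
    · rw [map_add, map_sub, hz']; abel
    · simpa using hz
  choose k hk0 hk using fun i => key (Pi.basisFun A (Fin n) i)
  let κ := (Pi.basisFun A (Fin n)).constr A k
  have hκ : ∀ i, κ (Pi.basisFun A (Fin n) i) = k i := fun i => Module.Basis.constr_basis _ _ _ _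
  refine ⟨κ, fun x => ?_, fun x hx => ?_⟩
  · have : π ∘ₗ κ = 0 := (Pi.basisFun A (Fin n)).ext fun i => by
      rw [LinearMap.comp_apply, hκ, hk0]; rfl
    exact LinearMap.congr_fun this x
  · have h3 : (I • ⊤ : Submodule A (Fin n → A)).mkQ ∘ₗ (κ - (LinearMap.id - h)) = 0 :=
      (Pi.basisFun A (Fin n)).ext fun i => by
        rw [LinearMap.comp_apply, LinearMap.sub_apply, hκ]
        exact (Submodule.Quotient.mk_eq_zero _).mpr (hk i)
    have h4 : κ x - (x - h x) ∈ (I • ⊤ : Submodule A (Fin n → A)) :=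
      (Submodule.Quotient.mk_eq_zero _).mp (LinearMap.congr_fun h3 x)
    have h5 : h x ∈ (I • ⊤ : Submodule A (Fin n → A)) := by
      rw [← Submodule.Quotient.mk_eq_zero, hh', hx]; simp
    have := Submodule.sub_mem _ h4 h5
    convert this using 1
    abel

lemma aux_flat {A : Type} [CommRing A] (I : Ideal A) (hI : I ≤ Ideal.jacobson ⊥)
    {P : Type} [AddCommGroup P] [Module A P] (hfin : Module.Finite A P)
    (hproj : Module.Projective (A ⧸ I) (P ⧸ (I • ⊤ : Submodule A P)))
    (hflat : Module.Flat A P) : Module.Projective A P := by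
  obtain ⟨n, π, hπ⟩ := Module.Finite.exists_fin' A P
  obtain ⟨κ, hκ0, hκ⟩ := aux_kappa I hproj π hπ
  suffices hK : LinearMap.ker π = LinearMap.range κ by
    have : Module.FinitePresentation A P := by
      rw [← Module.FinitePresentation.fg_ker_iff π hπ, hK, LinearMap.range_eq_map]
      exact Module.Finite.fg_top.map κ
    exact Module.Flat.projective_of_finitePresentation
  apply le_antisymm
  swap
  · rintro _ ⟨x, rfl⟩
    exact hκ0 x
  intro y hy
  have hy : π y = 0 := hy
  have hc : π ∘ₗ (κ.coprod (LinearMap.toSpanSingleton A _ y)) = 0 := by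
    apply LinearMap.ext
    rintro ⟨a, b⟩
    simp [hκ0, hy]
  obtain ⟨m, a, z, hza, haf⟩ := Module.Flat.exists_factorization_of_comp_eq_zero_of_free hc
  obtain ⟨w, hw⟩ := Module.projective_lifting_property π z hπ
  have hw' : ∀ x, π (w (a x)) = π x := fun x => by
    have h1 : π (w (a x)) = z (a x) := LinearMap.congr_fun hw (a x)
    rw [h1]; exact (LinearMap.congr_fun hza x).symm
  have ha1 : ∀ x, a (κ x) = 0 := fun x => by
    have := LinearMap.congr_fun haf (x, 0)
    simpa using this
  have ha2 : a y = 0 := by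
    have := LinearMap.congr_fun haf (0, 1)
    simpa using this
  -- `g = w ∘ a` is congruent to the identity on `F / range κ`
  let R := LinearMap.range κ
  have hR : R ≤ R.comap (w ∘ₗ a) := by
    rintro _ ⟨x, rfl⟩
    simp [ha1]
  let g := Submodule.mapQ R R (w ∘ₗ a) hR
  have hg : Function.Bijective g := by
    apply aux_bij I hI
    intro x
    obtain ⟨x, rfl⟩ := Submodule.Quotient.mk_surjective _ x
    have h1 : π (w (a x) - x) = 0 := by rw [map_sub, hw', sub_self]
    have h2 := Submodule.smul_top_le_comap_smul_top I R.mkQ (hκ _ h1)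
    rw [Submodule.mem_comap, map_sub] at h2
    have h3 : R.mkQ (κ (w (a x) - x)) = 0 := (Submodule.Quotient.mk_eq_zero _).mpr ⟨_, rfl⟩
    rw [h3, zero_sub] at h2
    exact (Submodule.neg_mem_iff _).mp h2
  have : g (Submodule.Quotient.mk y) = g 0 := by
    change Submodule.Quotient.mk (w (a y)) = _
    rw [ha2]; simp
  exact (Submodule.Quotient.mk_eq_zero _).mp (hg.1 this)

lemma aux_inter {A : Type} [CommRing A] (I : Ideal A)
    {P F : Type} [AddCommGroup P] [Module A P] [AddCommGroup F] [Module A F]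
    (hinj : Function.Injective (TensorProduct.lift ((LinearMap.lsmul A P).comp I.subtype)))
    (π : F →ₗ[A] P) (hπ : Function.Surjective π) (x : LinearMap.ker π)
    (hx : (x : F) ∈ (I • ⊤ : Submodule A F)) :
    x ∈ (I • ⊤ : Submodule A (LinearMap.ker π)) := by
  have h1 : ∃ t : TensorProduct A I F,
      TensorProduct.lift ((LinearMap.lsmul A F).comp I.subtype) t = x := by
    refine Submodule.smul_induction_on hx (fun r hr f _ => ?_) ?_
    · exact ⟨TensorProduct.tmul A ⟨r, hr⟩ f, by simp⟩
    · rintro _ _ ⟨t, rfl⟩ ⟨u, rfl⟩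
      exact ⟨t + u, by simp⟩
  obtain ⟨t, ht⟩ := h1
  have h2 : π ∘ₗ TensorProduct.lift ((LinearMap.lsmul A F).comp I.subtype) =
      TensorProduct.lift ((LinearMap.lsmul A P).comp I.subtype) ∘ₗ π.lTensor I := by
    ext; simp
  have h3 : π.lTensor I t = 0 := by
    apply hinj
    have := LinearMap.congr_fun h2 t
    rw [LinearMap.comp_apply, ht, LinearMap.comp_apply] at this
    rw [← this, map_zero]
    exact x.2
  have hex : Function.Exact (LinearMap.ker π).subtype π := LinearMap.exact_subtype_ker_map π
  obtain ⟨v, rfl⟩ := (lTensor_exact I hex hπ t).mp h3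
  have h4 : (LinearMap.ker π).subtype ∘ₗ
      TensorProduct.lift ((LinearMap.lsmul A (LinearMap.ker π)).comp I.subtype) =
      TensorProduct.lift ((LinearMap.lsmul A F).comp I.subtype) ∘ₗ
        (LinearMap.ker π).subtype.lTensor I := by
    ext; simp
  have h5 : x = TensorProduct.lift ((LinearMap.lsmul A (LinearMap.ker π)).comp I.subtype) v := by
    apply Subtype.ext
    rw [← ht]
    exact (LinearMap.congr_fun h4 v).symm
  rw [h5]
  clear * -
  induction v with
  | zero => simp
  | tmul r k => exact Submodule.smul_mem_smul r.2 trivial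
  | add a b ha hb => rw [map_add]; exact Submodule.add_mem _ ha hb

lemma aux_fp {A : Type} [CommRing A] (I : Ideal A) (hI : I ≤ Ideal.jacobson ⊥)
    {P : Type} [AddCommGroup P] [Module A P]
    (hproj : Module.Projective (A ⧸ I) (P ⧸ (I • ⊤ : Submodule A P)))
    (hfp : Module.FinitePresentation A P)
    (hinj : Function.Injective (TensorProduct.lift ((LinearMap.lsmul A P).comp I.subtype))) :
    Module.Projective A P := by
  obtain ⟨n, π, hπ⟩ := Module.Finite.exists_fin' A P
  obtain ⟨κ, hκ0, hκ⟩ := aux_kappa I hproj π hπ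
  have : Module.Finite A (LinearMap.ker π) :=
    Module.Finite.iff_fg.mpr (Module.FinitePresentation.fg_ker π hπ)
  let e : (Fin n → A) →ₗ[A] LinearMap.ker π := κ.codRestrict _ hκ0
  let g := e ∘ₗ (LinearMap.ker π).subtype
  have hg : Function.Bijective g := by
    apply aux_bij I hI
    intro x
    apply aux_inter I hinj π hπ
    exact hκ x x.2
  let ge := LinearEquiv.ofBijective g hg
  let ρ : (Fin n → A) →ₗ[A] (Fin n → A) :=
    LinearMap.id - (LinearMap.ker π).subtype ∘ₗ ge.symm.toLinearMap ∘ₗ e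
  have hρ : LinearMap.ker π ≤ LinearMap.ker ρ := by
    intro x hx
    have : ge.symm (e x) = ⟨x, hx⟩ := by
      rw [LinearEquiv.symm_apply_eq]; rfl
    simp [ρ, this]
  have hπρ : ∀ x, π (ρ x) = π x := by
    intro x
    have : π (ge.symm (e x) : Fin n → A) = 0 := (ge.symm (e x)).2
    simp [ρ, this]
  let i : P →ₗ[A] (Fin n → A) :=
    (LinearMap.ker π).liftQ ρ hρ ∘ₗ (π.quotKerEquivOfSurjective hπ).symm.toLinearMap
  refine Module.Projective.of_split i π ?_
  apply LinearMap.ext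
  intro p
  obtain ⟨x, rfl⟩ := hπ p
  have h1 : (π.quotKerEquivOfSurjective hπ).symm (π x) = Submodule.Quotient.mk x := by
    rw [LinearEquiv.symm_apply_eq]; rfl
  change π ((LinearMap.ker π).liftQ ρ hρ ((π.quotKerEquivOfSurjective hπ).symm (π x))) = π x
  rw [h1]
  exact hπρ x

lemma aux_coord {A : Type} [CommRing A] (I : Ideal A) {n : ℕ} (x : Fin n → A)
    (hx : ∀ i, x i ∈ I) : x ∈ (I • ⊤ : Submodule A (Fin n → A)) := by
  rw [← (Pi.basisFun A (Fin n)).sum_repr x]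
  refine Submodule.sum_mem _ fun i _ => Submodule.smul_mem_smul ?_ trivial
  simpa using hx i

lemma aux_dual {A : Type} [CommRing A] (I : Ideal A) (hI : I ≤ Ideal.jacobson ⊥)
    {P : Type} [AddCommGroup P] [Module A P] (hfin : Module.Finite A P)
    (hproj : Module.Projective (A ⧸ I) (P ⧸ (I • ⊤ : Submodule A P)))
    (H : ∀ f : (P ⧸ (I • ⊤ : Submodule A P)) →ₗ[A] (A ⧸ I), ∃ φ : P →ₗ[A] A,
      ∀ p, Submodule.Quotient.mk (φ p) = f (Submodule.Quotient.mk p)) :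
    Module.Projective A P := by
  obtain ⟨n, π, hπ⟩ := Module.Finite.exists_fin' A P
  obtain ⟨s, hs⟩ := aux_section I hproj π hπ
  have hc : ∀ i : Fin n, (I • ⊤ : Submodule A (Fin n → A)) ≤
      Submodule.comap (LinearMap.proj i) (I : Submodule A A) := fun i =>
    Submodule.smul_le.mpr fun r hr x _ => by
      simpa using I.mul_mem_right (x i) hr
  let c : ∀ i : Fin n, ((Fin n → A) ⧸ (I • ⊤ : Submodule A (Fin n → A))) →ₗ[A] (A ⧸ I) :=
    fun i => Submodule.mapQ _ (I : Submodule A A) (LinearMap.proj i) (hc i)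
  choose φ hφ using fun i => H (c i ∘ₗ s)
  let i := LinearMap.pi φ
  have hg : Function.Bijective (π ∘ₗ i) := by
    apply aux_bij I hI
    intro p
    apply hs
    obtain ⟨f, hf⟩ := Submodule.Quotient.mk_surjective _ (s (Submodule.Quotient.mk p))
    rw [← hf, Submodule.Quotient.eq]
    apply aux_coord
    intro j
    have := hφ j p
    rw [LinearMap.comp_apply, ← hf] at this
    exact (Submodule.Quotient.eq (I : Submodule A A)).mp this
  let ge := LinearEquiv.ofBijective _ hg
  refine Module.Projective.of_split i (ge.symm.toLinearMap ∘ₗ π) ?_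
  apply LinearMap.ext
  intro p
  exact ge.symm_apply_apply p

/-- Let A be a commutative ring, I an ideal contained in the Jacobson radical
of A, and P a finitely generated A-module with P/IP projective over A/I. Then the following
are equivalent: (i) P is projective; (ii) P is flat; (iii) P is finitely presented and the
natural map I ⊗_A P → P is injective; (iv) the natural reduction map
Hom_A(P, A) → Hom(P/IP, A/I) is surjective. -/
theorem stmt_3 (A : Type) [CommRing A] (I : Ideal A)
    (hI : I ≤ Ideal.jacobson ⊥)
    (P : Type) [AddCommGroup P] [Module A P] (hfin : Module.Finite A P)
    (hproj : Module.Projective (A ⧸ I) (P ⧸ (I • ⊤ : Submodule A P))) :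
    List.TFAE
      [ Module.Projective A P,
        Module.Flat A P,
        Module.FinitePresentation A P ∧
          Function.Injective (TensorProduct.lift ((LinearMap.lsmul A P).comp I.subtype)),
        Function.Surjective (fun φ : P →ₗ[A] A =>
          Submodule.mapQ (I • ⊤ : Submodule A P) (I : Submodule A A) φ
            (Submodule.smul_le.mpr fun r hr x _ => by
              simpa [Submodule.mem_comap, smul_eq_mul] using I.mul_mem_right (φ x) hr)) ] := by
  tfae_have 1 → 2 := fun _ => inferInstance
  tfae_have 2 → 1 := aux_flat I hI hfin hproj
  tfae_have 1 → 3 := by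
    intro h
    refine ⟨Module.finitePresentation_of_projective A P, ?_⟩
    have h1 : TensorProduct.lift ((LinearMap.lsmul A P).comp I.subtype) =
        (TensorProduct.lid A P).toLinearMap ∘ₗ I.subtype.rTensor P := by
      ext; simp
    rw [h1, LinearMap.coe_comp]
    exact (TensorProduct.lid A P).injective.comp
      (Module.Flat.rTensor_preserves_injective_linearMap _ I.subtype_injective)
  tfae_have 3 → 1 := fun h => aux_fp I hI hproj h.1 h.2
  tfae_have 1 → 4 := by
    intro h f
    obtain ⟨φ, hφ⟩ := Module.projective_lifting_property (I : Submodule A A).mkQ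
      (f ∘ₗ (I • ⊤ : Submodule A P).mkQ) (Submodule.mkQ_surjective _)
    refine ⟨φ, ?_⟩
    apply LinearMap.ext
    intro x
    obtain ⟨p, rfl⟩ := Submodule.Quotient.mk_surjective _ x
    exact LinearMap.congr_fun hφ p
  tfae_have 4 → 1 := by
    intro h
    refine aux_dual I hI hfin hproj fun f => ?_
    obtain ⟨φ, hφ⟩ := h f
    exact ⟨φ, fun p => LinearMap.congr_fun hφ (Submodule.Quotient.mk p)⟩
  tfae_finish
end

section
/- Let φ : A → B be a flat homomorphism of commutative rings and f ∈ A. Call a ring homomorphism A → B weakly unramified if B is flat as a module over B ⊗_A B (the module structure being given by the multiplication map B ⊗_A B → B). If the induced homomorphisms A/fA → B/fB and A_f → B_f are both weakly unramified (i.e. B/fB is flat over (B/fB) ⊗_{A/fA} (B/fB), and B_f is flat over B_f ⊗_{A_f} B_f), then A → B is weakly unramified, i.e. B is flat as a B ⊗_A B-module. -/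
/-- A ring homomorphism A → B of commutative rings is *weakly unramified* if B is flat as a
module over B ⊗_A B, the module structure being given by the multiplication map
μ : B ⊗_A B → B. -/
def WeaklyUnramified (A B : Type) [CommRing A] [CommRing B] [Algebra A B] : Prop :=
  letI : Module (TensorProduct A B B) B :=
    ((Algebra.TensorProduct.lmul' A (S := B)).toRingHom).toModule
  Module.Flat (TensorProduct A B B) B


section WU
open TensorProduct
variable {E M : Type} [CommRing E] [AddCommGroup M] [Module E M]

theorem wu_ann {A P : Type} [CommRing A] [AddCommGroup P] [Module A P] [Module.Flat A P]
    (f : A) (w : P) (h : f • w = 0) :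
    ∃ (k : ℕ) (a : Fin k → A) (y : Fin k → P), w = ∑ j, a j • y j ∧ ∀ j, f * a j = 0 := by
  have h' : ∑ i : Unit, (fun _ => f) i • (fun _ => w) i = 0 := by simpa using h
  obtain ⟨k, a, y, h1, h2⟩ := Module.Flat.isTrivialRelation_of_sum_smul_eq_zero h'
  exact ⟨k, a (), y, h1 (), by simpa using h2⟩

/-- dimension-shift step -/
theorem wu_b {K L F : Type} [AddCommGroup K] [AddCommGroup L] [AddCommGroup F]
    [Module E K] [Module E L] [Module E F] (i : K →ₗ[E] L) (hi : Function.Injective i)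
    (s : F →ₗ[E] L) (hs : Function.Surjective s)
    (h : Function.Injective ((LinearMap.ker ((LinearMap.range i).mkQ ∘ₗ s)).subtype.lTensor M)) :
    Function.Injective (i.lTensor M) := by
  set K0 := LinearMap.ker ((LinearMap.range i).mkQ ∘ₗ s) with hK0
  have hmem : ∀ x : K0, s x ∈ LinearMap.range i := by
    intro x
    have := x.2
    simp only [hK0, LinearMap.mem_ker, LinearMap.comp_apply, Submodule.mkQ_apply,
          Submodule.Quotient.mk_eq_zero] at this
    exact this
  let e : K ≃ₗ[E] LinearMap.range i := LinearEquiv.ofInjective i hi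
  let φ : K0 →ₗ[E] K := e.symm.toLinearMap ∘ₗ
    (LinearMap.codRestrict (LinearMap.range i) (s ∘ₗ K0.subtype) hmem)
  have hφ : ∀ x : K0, i (φ x) = s x := by
    intro x
    have : ((e (φ x) : LinearMap.range i) : L) = s x := by
      simp only [φ, LinearMap.comp_apply, LinearEquiv.coe_coe, LinearEquiv.apply_symm_apply]
      rfl
    simpa [e] using this
  -- exact sequence K0 → K × F → L
  let u : K0 →ₗ[E] K × F := (-φ).prod K0.subtype
  let v : K × F →ₗ[E] L := i.coprod s
  have hv : Function.Surjective v := by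
    intro l
    obtain ⟨x, rfl⟩ := hs l
    exact ⟨(0, x), by simp [v]⟩
  have huv : Function.Exact u v := by
    rintro ⟨k, x⟩
    constructor
    · intro hx
      simp only [v, LinearMap.coprod_apply] at hx
      have hx0 : x ∈ K0 := by
        simp only [hK0, LinearMap.mem_ker, LinearMap.comp_apply, Submodule.mkQ_apply,
          Submodule.Quotient.mk_eq_zero]
        exact ⟨-k, by rw [map_neg]; exact neg_eq_of_add_eq_zero_right hx⟩
      refine ⟨⟨x, hx0⟩, ?_⟩
      have : φ ⟨x, hx0⟩ = -k := by
        apply hi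
        rw [hφ, map_neg]
        exact (neg_eq_of_add_eq_zero_right hx).symm
      simp [u, this]
    · rintro ⟨y, hy⟩
      rw [← hy]
      simp [u, v, hφ]
  have hex := lTensor_exact M huv hv
  rw [injective_iff_map_eq_zero]
  intro x hx
  have h1 : (v.lTensor M) ((LinearMap.inl E K F).lTensor M x) = 0 := by
    rw [← LinearMap.comp_apply, ← LinearMap.lTensor_comp]
    have : v ∘ₗ LinearMap.inl E K F = i := by ext; simp [v]
    rw [this, hx]
  obtain ⟨y, hy⟩ := (hex _).1 h1
  have hy0 : y = 0 := by
    apply h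
    have := congrArg ((LinearMap.snd E K F).lTensor M) hy
    rw [← LinearMap.comp_apply, ← LinearMap.lTensor_comp, ← LinearMap.comp_apply (x := x),
      ← LinearMap.lTensor_comp] at this
    have e1 : LinearMap.snd E K F ∘ₗ u = K0.subtype := by ext; simp [u]
    have e2 : LinearMap.snd E K F ∘ₗ LinearMap.inl E K F = 0 := by ext; simp
    rw [e1, e2] at this
    simpa using this
  rw [hy0, map_zero] at hy
  have := congrArg ((LinearMap.fst E K F).lTensor M) hy
  rw [← LinearMap.comp_apply (x := x), ← LinearMap.lTensor_comp] at this
  have e2 : LinearMap.fst E K F ∘ₗ LinearMap.inl E K F = LinearMap.id := by ext; simp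
  rw [e2] at this
  simpa using this.symm

variable {A : Type} [CommRing A] [Algebra A E] [Module A M] [IsScalarTower A E M]

theorem wu_c1 [Module.Flat A M] (f : A) (ι : Type) : ∀ (z : M ⊗[E] (LinearMap.range
      ((algebraMap A E f) • (LinearMap.id : (ι →₀ E) →ₗ[E] (ι →₀ E)))))
    (_ : (Submodule.subtype _).lTensor M z = 0), z = 0 := by
  classical
  set g := algebraMap A E f with hg
  set m : (ι →₀ E) →ₗ[E] (ι →₀ E) := g • LinearMap.id with hm
  have hsurj := LinearMap.lTensor_surjective M m.surjective_rangeRestrict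
  intro z hz
  obtain ⟨w, rfl⟩ := hsurj z
  have hw : g • w = 0 := by
    rw [← LinearMap.comp_apply, ← LinearMap.lTensor_comp] at hz
    have : (LinearMap.range m).subtype ∘ₗ m.rangeRestrict = m := by ext; simp
    rw [this, hm, LinearMap.lTensor_smul] at hz
    simpa using hz
  let e := TensorProduct.finsuppScalarRight E E M ι
  have : Module.Flat A (ι →₀ M) := Module.Flat.of_linearEquiv (finsuppLequivDFinsupp A)
  have hw' : f • e w = 0 := by
    rw [← algebraMap_smul E f (e w), ← map_smul, hw, map_zero]
  obtain ⟨k, a, y, h1, h2⟩ := wu_ann f (e w) hw'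
  have h3 : w = ∑ j, algebraMap A E (a j) • e.symm (y j) := by
    apply e.injective
    rw [h1, map_sum]
    refine Finset.sum_congr rfl fun j _ => ?_
    rw [map_smul, e.apply_symm_apply, algebraMap_smul]
  rw [h3, map_sum]
  refine Finset.sum_eq_zero fun j _ => ?_
  rw [map_smul, ← LinearMap.smul_apply, ← LinearMap.lTensor_smul]
  have : algebraMap A E (a j) • m.rangeRestrict = 0 := by
    refine LinearMap.ext fun x => ?_
    apply Subtype.ext
    simp only [LinearMap.smul_apply]
    change algebraMap A E (a j) • (g • x) = 0
    simp only [zero_smul, map_zero, smul_smul, hg, ← map_mul, mul_comm (a j), h2]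
  rw [this]; simp

theorem wu_c0 {F : Type} [AddCommGroup F] [Module E F] (g : E)
    (H1 : ∀ (K F : Type) [AddCommGroup K] [AddCommGroup F] [Module E K] [Module E F]
      (i : K →ₗ[E] F), Function.Injective i → (∀ x : F, g • x = 0) →
      Function.Injective (i.lTensor M))
    (K0 R : Submodule E F) (hRK : R ≤ K0) (hgR : ∀ x, g • x ∈ R)
    (hR : ∀ z : M ⊗[E] R, R.subtype.lTensor M z = 0 → z = 0) :
    Function.Injective (K0.subtype.lTensor M) := by
  let R' : Submodule E K0 := R.comap K0.subtype
  let j : (K0 ⧸ R') →ₗ[E] (F ⧸ R) := Submodule.mapQ R' R K0.subtype le_rfl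
  have hj : Function.Injective j := by
    rw [← LinearMap.ker_eq_bot, LinearMap.ker_eq_bot']
    intro x
    obtain ⟨x, rfl⟩ := Submodule.mkQ_surjective _ x
    intro hx
    simpa [j, R'] using hx
  have hjT := H1 _ _ j hj (by
    intro x
    obtain ⟨x, rfl⟩ := Submodule.mkQ_surjective _ x
    rw [← map_smul]
    simp only [Submodule.mkQ_apply, Submodule.Quotient.mk_eq_zero]
    exact hgR x)
  have hex : Function.Exact (Submodule.inclusion hRK) R'.mkQ := by
    intro x
    simp only [Submodule.mkQ_apply, Submodule.Quotient.mk_eq_zero, R', Submodule.mem_comap]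
    constructor
    · intro h; exact ⟨⟨x, h⟩, rfl⟩
    · rintro ⟨y, rfl⟩; exact y.2
  have hexT := lTensor_exact M hex R'.mkQ_surjective
  rw [injective_iff_map_eq_zero]
  intro y hy
  have h1 : R'.mkQ.lTensor M y = 0 := by
    apply hjT
    rw [← LinearMap.comp_apply, ← LinearMap.lTensor_comp]
    have : j ∘ₗ R'.mkQ = R.mkQ ∘ₗ K0.subtype := by ext1; rfl
    rw [this, LinearMap.lTensor_comp, LinearMap.comp_apply, hy]; simp
  obtain ⟨z, rfl⟩ := (hexT _).1 h1
  have : z = 0 := by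
    apply hR
    rw [← LinearMap.comp_apply, ← LinearMap.lTensor_comp] at hy
    exact hy
  rw [this, map_zero]

theorem wu_c [Module.Flat A M] (f : A)
    (H1 : ∀ (K F : Type) [AddCommGroup K] [AddCommGroup F] [Module E K] [Module E F]
      (i : K →ₗ[E] F), Function.Injective i → (∀ x : F, algebraMap A E f • x = 0) →
      Function.Injective (i.lTensor M))
    {K L : Type} [AddCommGroup K] [AddCommGroup L] [Module E K] [Module E L]
    (i : K →ₗ[E] L) (hi : Function.Injective i)
    (hL : ∀ x : L, algebraMap A E f • x ∈ LinearMap.range i) :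
    Function.Injective (i.lTensor M) := by
  let s : (L →₀ E) →ₗ[E] L := Finsupp.linearCombination E id
  have hs : Function.Surjective s := Finsupp.linearCombination_id_surjective E L
  apply wu_b i hi s hs
  set K0 := LinearMap.ker ((LinearMap.range i).mkQ ∘ₗ s) with hK0
  set R := LinearMap.range
      ((algebraMap A E f) • (LinearMap.id : (L →₀ E) →ₗ[E] (L →₀ E))) with hR
  have hRK : R ≤ K0 := by
    rintro _ ⟨x, rfl⟩
    simp only [hK0, LinearMap.mem_ker, LinearMap.comp_apply, Submodule.mkQ_apply,
          Submodule.Quotient.mk_eq_zero]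
    rw [LinearMap.smul_apply, map_smul]
    exact hL (s x)
  exact wu_c0 _ H1 K0 R hRK (fun x => ⟨x, rfl⟩) (wu_c1 f L)

/-- E[f] ⊗ M → E ⊗ M is injective -/
theorem wu_d [Module.Flat A M] [Module.Flat A E] (f : A) :
    ∀ (z : M ⊗[E] (LinearMap.ker (LinearMap.lsmul E E (algebraMap A E f))))
    (_ : (Submodule.subtype _).lTensor M z = 0), z = 0 := by
  set T := LinearMap.ker (LinearMap.lsmul E E (algebraMap A E f)) with hT
  let Af : Submodule A A := LinearMap.ker (LinearMap.lsmul A A f)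
  have hmem : ∀ a : Af, algebraMap A E a ∈ T := by
    rintro ⟨a, ha⟩
    simp only [Af, LinearMap.mem_ker, LinearMap.lsmul_apply, smul_eq_mul] at ha
    simp [hT, ← map_mul, ha]
  let c : Af →ₗ[A] T := 
    { toFun := fun a => ⟨algebraMap A E a, hmem a⟩
      map_add' := fun a b => by ext; simp
      map_smul' := fun a b => by ext; simp [Algebra.smul_def] }
  let θ : M ⊗[A] Af →ₗ[A] M ⊗[E] T := TensorProduct.lift
    { toFun := fun m =>
        { toFun := fun a => m ⊗ₜ c a
          map_add' := fun a b => by rw [map_add, TensorProduct.tmul_add]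
          map_smul' := fun a b => by
            rw [map_smul, TensorProduct.tmul_smul]; rfl }
      map_add' := fun a b => by ext; simp [TensorProduct.add_tmul]
      map_smul' := fun a b => by ext; simp [TensorProduct.smul_tmul'] }
  have hθ : Function.Surjective θ := by
    intro z
    induction z with
    | zero => exact ⟨0, map_zero _⟩
    | add x y hx hy =>
      obtain ⟨x, rfl⟩ := hx
      obtain ⟨y, rfl⟩ := hy
      exact ⟨x + y, map_add _ _ _⟩
    | tmul m t =>
      obtain ⟨t, ht⟩ := t
      have ht' : f • t = 0 := by
        simpa [hT, Algebra.smul_def] using ht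
      obtain ⟨k, a, y, h1, h2⟩ := wu_ann f t ht'
      refine ⟨∑ j, (y j • m) ⊗ₜ ⟨a j, by simpa [Af] using h2 j⟩, ?_⟩
      rw [map_sum]
      have : (⟨t, ht⟩ : T) = ∑ j, y j • c ⟨a j, by simpa [Af] using h2 j⟩ := by
        ext
        simp [h1, c, Algebra.smul_def, mul_comm]
      rw [this, TensorProduct.tmul_sum]
      refine Finset.sum_congr rfl fun j _ => ?_
      simp [θ, TensorProduct.smul_tmul]
  intro z hz
  obtain ⟨x, rfl⟩ := hθ z
  have hinj := Module.Flat.lTensor_preserves_injective_linearMap (M := M) Af.subtype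
    Subtype.val_injective
  have : x = 0 := by
    apply hinj
    apply (TensorProduct.rid A M).injective
    rw [map_zero, map_zero]
    have hx : ∀ x, TensorProduct.rid A M (Af.subtype.lTensor M x) =
        TensorProduct.rid E M (T.subtype.lTensor M (θ x)) := by
      intro x
      induction x with
      | zero => simp
      | add x y hx hy => simp only [map_add, hx, hy]
      | tmul m a => simp [θ, c]
    rw [hx, hz, map_zero]
  rw [this, map_zero]

theorem wu_main [Module.Flat A M] [Module.Flat A E] (f : A)
    (H1 : ∀ (K F : Type) [AddCommGroup K] [AddCommGroup F] [Module E K] [Module E F]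
      (i : K →ₗ[E] F), Function.Injective i → (∀ x : F, algebraMap A E f • x = 0) →
      Function.Injective (i.lTensor M))
    {Mf : Type} [AddCommGroup Mf] [Module E Mf] (l : M →ₗ[E] Mf)
    [IsLocalizedModule (Submonoid.powers (algebraMap A E f)) l] [Module.Flat E Mf] :
    Module.Flat E M := by
  rw [Module.Flat.iff_lTensor_injective']
  intro I
  set g := algebraMap A E f with hg
  -- f-torsion part
  have key : ∀ x : M ⊗[E] I, I.subtype.lTensor M x = 0 → g • x = 0 → x = 0 := by
    intro x hx hgx
    let m : I →ₗ[E] I := g • LinearMap.id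
    let G := LinearMap.range m
    have hG : Function.Injective (G.subtype.lTensor M) :=
      wu_c f H1 G.subtype Subtype.val_injective (by
        intro x; rw [Submodule.range_subtype]; exact ⟨x, rfl⟩)
    have hx1 : m.rangeRestrict.lTensor M x = 0 := by
      apply hG
      rw [← LinearMap.comp_apply, ← LinearMap.lTensor_comp]
      have : G.subtype ∘ₗ m.rangeRestrict = m := by ext; simp [G]
      rw [this]
      simp only [m, LinearMap.lTensor_smul]
      simpa using hgx
    have hex : Function.Exact (LinearMap.ker m).subtype m.rangeRestrict := by
      intro x
      rw [← LinearMap.mem_ker, LinearMap.ker_rangeRestrict]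
      simp
    obtain ⟨y, rfl⟩ := (lTensor_exact M hex m.surjective_rangeRestrict _).1 hx1
    set T := LinearMap.ker (LinearMap.lsmul E E g) with hT
    let i : LinearMap.ker m →ₗ[E] T := LinearMap.codRestrict T
      (I.subtype ∘ₗ (LinearMap.ker m).subtype) (by
        rintro ⟨⟨x, hx⟩, hx'⟩
        simpa [m, hT] using congrArg Subtype.val hx')
    have hi : Function.Injective i := by
      intro a b hab
      apply Subtype.ext
      apply Subtype.ext
      exact congrArg (fun t : T => (t : E)) hab
    have hiT := H1 _ _ i hi (by
      rintro ⟨t, ht⟩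
      ext
      simpa [hT] using ht)
    have : y = 0 := by
      apply hiT
      rw [map_zero]
      apply wu_d f
      rw [← LinearMap.comp_apply, ← LinearMap.lTensor_comp] at hx ⊢
      exact hx
    rw [this, map_zero]
  have key2 : ∀ n : ℕ, ∀ x : M ⊗[E] I, I.subtype.lTensor M x = 0 → g ^ n • x = 0 → x = 0 := by
    intro n
    induction n with
    | zero => intro x _ h; simpa using h
    | succ n ih =>
      intro x hx h
      apply ih x hx
      apply key
      · rw [map_smul, hx, smul_zero]
      · rw [smul_smul, ← pow_succ', h]
  rw [injective_iff_map_eq_zero]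
  intro x hx
  have hfl := Module.Flat.lTensor_preserves_injective_linearMap (M := Mf) I.subtype
    Subtype.val_injective
  have h0 : l.rTensor I x = 0 := by
    apply hfl
    rw [← LinearMap.comp_apply, LinearMap.lTensor_comp_rTensor, ← LinearMap.rTensor_comp_lTensor,
      LinearMap.comp_apply, hx]
    simp
  have hloc : IsLocalizedModule (Submonoid.powers g) (l.rTensor I) :=
    inferInstanceAs (IsLocalizedModule _ (AlgebraTensorModule.rTensor E I l))
  obtain ⟨⟨_, n, rfl⟩, hn⟩ := (IsLocalizedModule.eq_zero_iff (Submonoid.powers g) (l.rTensor I)).1 h0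
  exact key2 n x hx hn


/-- reduction of H1 to flatness over a quotient ring -/
theorem wu_h1 {E E' M M' : Type} [CommRing E] [CommRing E'] [Algebra E E']
    (hsurj : Function.Surjective (algebraMap E E')) (g : E)
    (hker : RingHom.ker (algebraMap E E') ≤ Ideal.span {g})
    [AddCommGroup M] [Module E M] [AddCommGroup M'] [Module E M'] [Module E' M']
    [IsScalarTower E E' M'] [Module.Flat E' M'] (q : M →ₗ[E] M') (hq : Function.Surjective q)
    (hqk : ∀ x, q x = 0 → ∃ y, x = g • y) (hqg : ∀ x : M, q (g • x) = 0) :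
    ∀ (K F : Type) [AddCommGroup K] [AddCommGroup F] [Module E K] [Module E F]
      (i : K →ₗ[E] F), Function.Injective i → (∀ x : F, g • x = 0) →
      Function.Injective (i.lTensor M) := by
  intro K F _ _ _ _ i hi hF
  have hK : ∀ x : K, g • x = 0 := fun x => hi (by rw [map_smul, hF, map_zero])
  have hle : ∀ (N : Type) [AddCommGroup N] [Module E N], (∀ x : N, g • x = 0) →
      RingHom.ker (algebraMap E E') ≤ RingHom.ker (Module.toAddMonoidEnd E N) := by
    intro N _ _ hN e he
    obtain ⟨c, rfl⟩ := Ideal.mem_span_singleton'.1 (hker he)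
    rw [RingHom.mem_ker]
    ext x
    change (c * g) • x = 0
    rw [mul_smul, hN, smul_zero]
  let mk : ∀ (N : Type) [AddCommGroup N] [Module E N], (∀ x : N, g • x = 0) → Module E' N :=
    fun N _ _ hN => Module.compHom N
      ((algebraMap E E').liftOfSurjective hsurj ⟨Module.toAddMonoidEnd E N, hle N hN⟩)
  have mk_smul : ∀ (N : Type) [AddCommGroup N] [Module E N] (hN : ∀ x : N, g • x = 0)
      (e : E) (x : N), letI := mk N hN; algebraMap E E' e • x = e • x := by
    intro N _ _ hN e x
    change ((algebraMap E E').liftOfSurjective hsurj ⟨Module.toAddMonoidEnd E N, hle N hN⟩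
      (algebraMap E E' e)) x = Module.toAddMonoidEnd E N e x
    congr 1
    exact RingHom.liftOfRightInverse_comp_apply _ _ _ ⟨Module.toAddMonoidEnd E N, hle N hN⟩ e
  let : Module E' K := mk K hK
  let : Module E' F := mk F hF
  have tK : IsScalarTower E E' K := IsScalarTower.of_algebraMap_smul (mk_smul K hK)
  have tF : IsScalarTower E E' F := IsScalarTower.of_algebraMap_smul (mk_smul F hF)
  let i' : K →ₗ[E'] F :=
    { i with
      map_smul' := by
        intro e x
        obtain ⟨e, rfl⟩ := hsurj e
        simp [algebraMap_smul] }
  have hcs : ∀ (N : Type) [AddCommGroup N] [Module E N] [Module E' N] [IsScalarTower E E' N],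
      TensorProduct.CompatibleSMul E E' M' N := by
    intro N _ _ _ _
    refine ⟨fun e m n => ?_⟩
    obtain ⟨e, rfl⟩ := hsurj e
    simp only [algebraMap_smul, TensorProduct.smul_tmul]
  have hcK := hcs K
  have hcF := hcs F
  have hi' := Module.Flat.lTensor_preserves_injective_linearMap (M := M') i' hi
  let eK := TensorProduct.equivOfCompatibleSMul E' E E M' K
  let eF := TensorProduct.equivOfCompatibleSMul E' E E M' F
  have hcomm : ∀ x : M' ⊗[E] K, eF (i.lTensor M' x) = i'.lTensor M' (eK x) := by
    intro x
    induction x with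
    | zero => simp
    | add x y hx hy => simp only [map_add, hx, hy]
    | tmul m k => rfl
  have hiM' : Function.Injective (i.lTensor M') := by
    intro x y hxy
    apply eK.injective
    apply hi'
    rw [← hcomm, ← hcomm, hxy]
  have hex : Function.Exact (g • (LinearMap.id : M →ₗ[E] M)) q := by
    intro x
    constructor
    · intro h
      obtain ⟨y, rfl⟩ := hqk x h
      exact ⟨y, rfl⟩
    · rintro ⟨y, rfl⟩
      exact hqg y
  have hexT := rTensor_exact K hex hq
  rw [injective_iff_map_eq_zero]
  intro x hx
  have h1 : q.rTensor K x = 0 := by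
    apply hiM'
    rw [← LinearMap.comp_apply, LinearMap.lTensor_comp_rTensor, ← LinearMap.rTensor_comp_lTensor,
      LinearMap.comp_apply, hx]
    simp
  obtain ⟨y, rfl⟩ := (hexT _).1 h1
  rw [LinearMap.rTensor_smul]
  simp only [LinearMap.rTensor_id, LinearMap.smul_apply, LinearMap.id_apply]
  induction y with
  | zero => simp
  | add x y hx hy => 
    rw [smul_add]
    have : ∀ y : M ⊗[E] K, g • y = 0 := by
      intro y
      induction y with
      | zero => simp
      | add x y hx hy => rw [smul_add, hx, hy, add_zero]
      | tmul m k => rw [← TensorProduct.tmul_smul, hK, TensorProduct.tmul_zero]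
    rw [this, this, add_zero]
  | tmul m k => rw [← TensorProduct.tmul_smul, hK, TensorProduct.tmul_zero]

theorem wu_h1' {E E' M M' : Type} [CommRing E] [CommRing E'] (π : E →+* E')
    (hsurj : Function.Surjective π) (g : E)
    (hker : RingHom.ker π ≤ Ideal.span {g})
    [AddCommGroup M] [Module E M] [AddCommGroup M'] [Module E M'] [Module E' M']
    (hsm : ∀ (e : E) (m : M'), π e • m = e • m)
    [Module.Flat E' M'] (q : M →ₗ[E] M') (hq : Function.Surjective q)
    (hqk : ∀ x, q x = 0 → ∃ y, x = g • y) (hqg : ∀ x : M, q (g • x) = 0) :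
    ∀ (K F : Type) [AddCommGroup K] [AddCommGroup F] [Module E K] [Module E F]
      (i : K →ₗ[E] F), Function.Injective i → (∀ x : F, g • x = 0) →
      Function.Injective (i.lTensor M) := by
  let alg : Algebra E E' := π.toAlgebra
  have tow : IsScalarTower E E' M' := IsScalarTower.of_algebraMap_smul hsm
  exact wu_h1 hsurj g hker q hq hqk hqg

theorem wu_final {A B Aq Bq Al Bl : Type} [CommRing A] [CommRing B] [Algebra A B]
    [CommRing Aq] [CommRing Bq] [CommRing Al] [CommRing Bl]
    [Algebra A Aq] [Algebra B Bq] [Algebra A Bq] [Algebra Aq Bq]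
    [IsScalarTower A B Bq] [IsScalarTower A Aq Bq]
    [Algebra A Al] [Algebra B Bl] [Algebra A Bl] [Algebra Al Bl]
    [IsScalarTower A B Bl] [IsScalarTower A Al Bl]
    [Module.Flat A B] (f : A)
    (hA : Function.Surjective (algebraMap A Aq)) (hB : Function.Surjective (algebraMap B Bq))
    (hk : RingHom.ker (algebraMap B Bq) = Ideal.span {algebraMap A B f})
    [IsLocalization.Away f Al] [IsLocalization.Away (algebraMap A B f) Bl]
    (h1 : (Algebra.TensorProduct.lmul' Aq (S := Bq)).toRingHom.Flat)
    (h2 : (Algebra.TensorProduct.lmul' Al (S := Bl)).toRingHom.Flat) :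
    (Algebra.TensorProduct.lmul' A (S := B)).toRingHom.Flat := by
  let algEB : Algebra (B ⊗[A] B) B := (Algebra.TensorProduct.lmul' A (S := B)).toRingHom.toAlgebra
  have hEB : ∀ x, algebraMap (B ⊗[A] B) B x = Algebra.TensorProduct.lmul' A (S := B) x :=
    fun _ => rfl
  have tow : IsScalarTower A (B ⊗[A] B) B := IsScalarTower.of_algebraMap_eq fun x => by
    rw [hEB, AlgHom.commutes]
  change Module.Flat (B ⊗[A] B) B
  -- localization
  let ρ : B ⊗[A] B →ₐ[A] Bl ⊗[A] Bl := Algebra.TensorProduct.map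
    (IsScalarTower.toAlgHom A B Bl) (IsScalarTower.toAlgHom A B Bl)
  let eq : Bl ⊗[Al] Bl ≃ₐ[Al] Bl ⊗[A] Bl :=
    IsLocalization.algebraTensorEquiv (Submonoid.powers f) Al Bl Bl
  have hBl : (IsScalarTower.toAlgHom A B Bl).toRingHom.Flat :=
    RingHom.flat_algebraMap_iff.2
      (IsLocalization.flat Bl (Submonoid.powers (algebraMap A B f)) : Module.Flat B Bl)
  have hρ : ρ.toRingHom.Flat := RingHom.Flat.tensorProductMap hBl hBl
  have heq : (eq.symm : Bl ⊗[A] Bl →+* Bl ⊗[Al] Bl).Flat := .of_bijective eq.symm.bijective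
  have hσ := (hρ.comp heq).comp h2
  let algEBl : Algebra (B ⊗[A] B) Bl := ((algebraMap B Bl).comp (algebraMap (B ⊗[A] B) B)).toAlgebra
  have towl : IsScalarTower (B ⊗[A] B) B Bl := IsScalarTower.of_algebraMap_eq fun _ => rfl
  have hσe : (Algebra.TensorProduct.lmul' Al (S := Bl)).toRingHom.comp
      ((eq.symm : Bl ⊗[A] Bl →+* Bl ⊗[Al] Bl).comp ρ.toRingHom) = algebraMap (B ⊗[A] B) Bl := by
    refine RingHom.ext fun x => ?_
    induction x with
    | zero => simp
    | add x y hx hy => rw [map_add, map_add, hx, hy]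
    | tmul x y =>
      change (algebraMap B Bl x) * (algebraMap B Bl y) = algebraMap B Bl (x * y)
      rw [map_mul]
  rw [hσe, RingHom.flat_algebraMap_iff] at hσ
  have hloc : IsLocalizedModule (Submonoid.powers (algebraMap A (B ⊗[A] B) f))
      (IsScalarTower.toAlgHom (B ⊗[A] B) B Bl).toLinearMap := by
    rw [isLocalizedModule_iff_isLocalization, Algebra.algebraMapSubmonoid_powers,
      ← IsScalarTower.algebraMap_apply]
    infer_instance
  -- quotient
  let π0 : B ⊗[A] B →ₐ[A] Bq ⊗[A] Bq := Algebra.TensorProduct.map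
    (IsScalarTower.toAlgHom A B Bq) (IsScalarTower.toAlgHom A B Bq)
  have hcs : TensorProduct.CompatibleSMul A Aq Bq Bq := by
    refine ⟨fun e m n => ?_⟩
    obtain ⟨e, rfl⟩ := hA e
    simp only [algebraMap_smul, TensorProduct.smul_tmul]
  let e1 : Bq ⊗[A] Bq ≃ₐ[A] Bq ⊗[Aq] Bq :=
    Algebra.TensorProduct.equivOfCompatibleSMul Aq A A Bq Bq
  let π : B ⊗[A] B →+* Bq ⊗[Aq] Bq := (e1 : Bq ⊗[A] Bq →+* Bq ⊗[Aq] Bq).comp π0.toRingHom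
  have hπ0 : Function.Surjective π0 := TensorProduct.map_surjective hB hB
  have hπ : Function.Surjective π := e1.surjective.comp hπ0
  have hkπ : RingHom.ker π ≤ Ideal.span {algebraMap A (B ⊗[A] B) f} := by
    intro x hx
    have hx0 : x ∈ RingHom.ker π0 := e1.injective (by rw [map_zero]; exact hx)
    have hk' : RingHom.ker (IsScalarTower.toAlgHom A B Bq) = Ideal.span {algebraMap A B f} := hk
    rw [Algebra.TensorProduct.map_ker _ _ hB hB, hk', Ideal.map_span, Ideal.map_span,
      Set.image_singleton, Set.image_singleton, AlgHom.commutes, AlgHom.commutes, sup_idem] at hx0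
    exact hx0
  let algE' : Algebra (Bq ⊗[Aq] Bq) Bq :=
    (Algebra.TensorProduct.lmul' Aq (S := Bq)).toRingHom.toAlgebra
  let algEBq : Algebra (B ⊗[A] B) Bq := ((algebraMap B Bq).comp (algebraMap (B ⊗[A] B) B)).toAlgebra
  have towq : IsScalarTower (B ⊗[A] B) B Bq := IsScalarTower.of_algebraMap_eq fun _ => rfl
  have towq' : ∀ x : B ⊗[A] B, algebraMap (Bq ⊗[Aq] Bq) Bq (π x) = algebraMap (B ⊗[A] B) Bq x := by
    intro x
    induction x with
    | zero => simp
    | add x y hx hy => rw [map_add, map_add, map_add, hx, hy]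
    | tmul x y =>
      change (algebraMap B Bq x) * (algebraMap B Bq y) = algebraMap B Bq (x * y)
      rw [map_mul]
  have hfl : Module.Flat (Bq ⊗[Aq] Bq) Bq := h1
  have hf0 : algebraMap B Bq (algebraMap A B f) = 0 := by
    rw [← RingHom.mem_ker, hk]
    exact Ideal.mem_span_singleton_self _
  have H1 := wu_h1' π hπ (algebraMap A (B ⊗[A] B) f) hkπ
    (fun e m => by rw [Algebra.smul_def, Algebra.smul_def, towq'])
    (IsScalarTower.toAlgHom (B ⊗[A] B) B Bq).toLinearMap hB
    (fun x hx => by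
      have hx' : x ∈ RingHom.ker (algebraMap B Bq) := hx
      rw [hk] at hx'
      obtain ⟨y, rfl⟩ := Ideal.mem_span_singleton'.1 hx'
      exact ⟨y, by rw [algebraMap_smul, Algebra.smul_def, mul_comm]⟩)
    (fun x => by
      change algebraMap B Bq _ = 0
      rw [algebraMap_smul, Algebra.smul_def, map_mul, hf0, zero_mul])
  exact wu_main f H1 (IsScalarTower.toAlgHom (B ⊗[A] B) B Bl).toLinearMap

end WU

/-- Let A → B be a flat homomorphism of commutative rings and f ∈ A.
If the induced homomorphisms A/fA → B/fB and A_f → B_f are both weakly unramified, then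
A → B is weakly unramified. -/
theorem stmt_4 (A B : Type) [CommRing A] [CommRing B] [Algebra A B]
    (hflat : Module.Flat A B) (f : A)
    (h1 :
      letI : Algebra (A ⧸ Ideal.span {f}) (B ⧸ Ideal.span {algebraMap A B f}) :=
        (Ideal.Quotient.lift (Ideal.span {f})
          ((Ideal.Quotient.mk (Ideal.span {algebraMap A B f})).comp (algebraMap A B))
          (fun a ha => by
            rw [RingHom.comp_apply, Ideal.Quotient.eq_zero_iff_mem]
            exact Ideal.mem_span_singleton.mpr
              (map_dvd (algebraMap A B) (Ideal.mem_span_singleton.mp ha)))).toAlgebra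
      WeaklyUnramified (A ⧸ Ideal.span {f}) (B ⧸ Ideal.span {algebraMap A B f}))
    (h2 :
      letI : Algebra (Localization.Away f) (Localization.Away (algebraMap A B f)) :=
        (IsLocalization.Away.map (Localization.Away f)
          (Localization.Away (algebraMap A B f)) (algebraMap A B) f).toAlgebra
      WeaklyUnramified (Localization.Away f) (Localization.Away (algebraMap A B f))) :
    WeaklyUnramified A B := by
  let algq : Algebra (A ⧸ Ideal.span {f}) (B ⧸ Ideal.span {algebraMap A B f}) :=
    (Ideal.Quotient.lift (Ideal.span {f})
      ((Ideal.Quotient.mk (Ideal.span {algebraMap A B f})).comp (algebraMap A B))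
      (fun a ha => by
        rw [RingHom.comp_apply, Ideal.Quotient.eq_zero_iff_mem]
        exact Ideal.mem_span_singleton.mpr
          (map_dvd (algebraMap A B) (Ideal.mem_span_singleton.mp ha)))).toAlgebra
  let algl : Algebra (Localization.Away f) (Localization.Away (algebraMap A B f)) :=
    (IsLocalization.Away.map (Localization.Away f)
      (Localization.Away (algebraMap A B f)) (algebraMap A B) f).toAlgebra
  have tq : IsScalarTower A (A ⧸ Ideal.span {f}) (B ⧸ Ideal.span {algebraMap A B f}) :=
    IsScalarTower.of_algebraMap_eq fun x => rfl
  have tl : IsScalarTower A (Localization.Away f) (Localization.Away (algebraMap A B f)) :=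
    IsScalarTower.of_algebraMap_eq fun x => by
      rw [IsScalarTower.algebraMap_apply A B (Localization.Away (algebraMap A B f))]
      exact (IsLocalization.map_eq (S := Localization.Away f)
        (Q := Localization.Away (algebraMap A B f)) (M := Submonoid.powers f)
        (T := Submonoid.powers (algebraMap A B f)) (g := algebraMap A B) (by
          rw [Submonoid.powers_le]
          exact Submonoid.mem_powers _) x).symm
  exact wu_final (Aq := A ⧸ Ideal.span {f}) (Bq := B ⧸ Ideal.span {algebraMap A B f})
    (Al := Localization.Away f) (Bl := Localization.Away (algebraMap A B f)) f
    Ideal.Quotient.mk_surjective Ideal.Quotient.mk_surjective (Ideal.mk_ker) h1 h2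
end

section
/- Let A → B be a homomorphism of commutative rings making B a finitely generated A-module, and let f ∈ A. Call a ring homomorphism A → B unramified if B is projective as a module over B ⊗_A B (via the multiplication map). If A/fA → B/fB and A_f → B_f are both unramified (i.e. B/fB is projective as a (B/fB) ⊗_{A/fA} (B/fB)-module, and B_f is projective as a B_f ⊗_{A_f} B_f-module), then A → B is unramified, i.e. B is projective as a B ⊗_A B-module. -/
/-- A ring homomorphism A → B of commutative rings is *unramified* if B is projective as a
module over B ⊗_A B, the module structure being given by the multiplication map
μ : B ⊗_A B → B. -/
def MulUnramified (A B : Type) [CommRing A] [CommRing B] [Algebra A B] : Prop :=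
  letI : Module (TensorProduct A B B) B :=
    ((Algebra.TensorProduct.lmul' A (S := B)).toRingHom).toModule
  Module.Projective (TensorProduct A B B) B

open scoped TensorProduct in
theorem mulUnramified_exists (A B : Type) [CommRing A] [CommRing B] [Algebra A B] :
    MulUnramified A B ↔ ∃ t : B ⊗[A] B,
      (∀ s, ((1 : B) ⊗ₜ[A] s - s ⊗ₜ[A] (1 : B)) * t = 0) ∧
        Algebra.TensorProduct.lmul' A (S := B) t = 1 := by
  let inst : Module (TensorProduct A B B) B :=
    ((Algebra.TensorProduct.lmul' A (S := B)).toRingHom).toModule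
  have hsm : ∀ (x : B ⊗[A] B) (b : B), x • b = Algebra.TensorProduct.lmul' A (S := B) x * b :=
    fun _ _ => rfl
  let g : (B ⊗[A] B) →ₗ[B ⊗[A] B] B :=
    { toFun := fun x => Algebra.TensorProduct.lmul' A (S := B) x
      map_add' := fun x y => map_add _ x y
      map_smul' := fun x y => by simp [hsm] }
  constructor
  · intro h
    have h' : Module.Projective (B ⊗[A] B) B := h
    have hg : Function.Surjective g := fun b => ⟨b ⊗ₜ 1, by simp [g]⟩
    obtain ⟨σ, hσ⟩ := Module.projective_lifting_property g LinearMap.id hg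
    refine ⟨σ 1, fun s => ?_, ?_⟩
    · rw [← smul_eq_mul, ← map_smul, hsm]
      simp
    · exact LinearMap.congr_fun hσ 1
  · rintro ⟨t, ht, ht1⟩
    have key : ∀ x : B ⊗[A] B, x * t = (Algebra.TensorProduct.lmul' A (S := B) x ⊗ₜ 1) * t := by
      intro x
      induction x using TensorProduct.induction_on with
      | zero => simp
      | add x y hx hy => rw [add_mul, hx, hy, map_add, TensorProduct.add_tmul, add_mul]
      | tmul a b =>
        have h1 := ht b
        rw [sub_mul, sub_eq_zero] at h1
        have e : a ⊗ₜ[A] b = (a ⊗ₜ[A] (1 : B)) * ((1 : B) ⊗ₜ[A] b) := by simp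
        have e2 : (a * b) ⊗ₜ[A] (1 : B) = (a ⊗ₜ[A] (1 : B)) * (b ⊗ₜ[A] (1 : B)) := by simp
        rw [Algebra.TensorProduct.lmul'_apply_tmul, e, e2, mul_assoc, h1, mul_assoc]
    let σ : B →ₗ[B ⊗[A] B] (B ⊗[A] B) :=
      { toFun := fun b => (b ⊗ₜ 1) * t
        map_add' := fun x y => by rw [TensorProduct.add_tmul, add_mul]
        map_smul' := fun x b => by
          have e2 : (Algebra.TensorProduct.lmul' A (S := B) x * b) ⊗ₜ[A] (1 : B) =
            (b ⊗ₜ[A] (1 : B)) * (Algebra.TensorProduct.lmul' A (S := B) x ⊗ₜ[A] (1 : B)) := by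
              simp [mul_comm]
          rw [hsm, e2, mul_assoc, ← key, RingHom.id_apply, smul_eq_mul]
          ring }
    have : Module.Projective (B ⊗[A] B) B := by
      refine Module.Projective.of_split σ g ?_
      ext b
      simp [σ, g, ht1]
    exact this

theorem mulUnramified_iff (A B : Type) [CommRing A] [CommRing B] [Algebra A B]
    [Algebra.EssFiniteType A B] :
    MulUnramified A B ↔ Algebra.FormallyUnramified A B := by
  rw [mulUnramified_exists, Algebra.FormallyUnramified.iff_exists_tensorProduct]

open scoped TensorProduct in
theorem formallyUnramified_glue (A B : Type) [CommRing A] [CommRing B] [Algebra A B]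
    [Module.Finite A B] (f : A)
    (h1 : Algebra.FormallyUnramified A (B ⧸ Ideal.span {algebraMap A B f}))
    (h2 : Algebra.FormallyUnramified A (Localization.Away (algebraMap A B f))) :
    Algebra.FormallyUnramified A B := by
  set J := Ideal.span {algebraMap A B f} with hJ
  have hs1 : ∀ x : (B ⧸ J) ⊗[B] Ω[B⁄A], x = 0 := by
    intro x
    obtain ⟨x, rfl⟩ := (KaehlerDifferential.exact_kerCotangentToTensor_mapBaseChange A B
      (B ⧸ J) Ideal.Quotient.mk_surjective x).mp (Subsingleton.elim _ _)
    obtain ⟨⟨x, hx⟩, rfl⟩ := Ideal.toCotangent_surjective _ x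
    simp only [KaehlerDifferential.kerCotangentToTensor_toCotangent]
    replace hx : x ∈ J := by simpa [RingHom.mem_ker, Ideal.Quotient.eq_zero_iff_mem] using hx
    obtain ⟨b, rfl⟩ := Ideal.mem_span_singleton.mp hx
    rw [← Algebra.smul_def, Derivation.map_smul, ← algebraMap_smul B f, ← TensorProduct.smul_tmul]
    have : (algebraMap A B f) • (1 : B ⧸ J) = 0 := by
      rw [Algebra.smul_def, mul_one]
      exact Ideal.Quotient.eq_zero_iff_mem.mpr (Ideal.mem_span_singleton_self _)
    rw [this, TensorProduct.zero_tmul]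
  have : Subsingleton ((B ⧸ J) ⊗[B] Ω[B⁄A]) := ⟨fun x y => by rw [hs1 x, hs1 y]⟩
  have hsub : Subsingleton (Ω[B⁄A] ⧸ (J • (⊤ : Submodule B Ω[B⁄A]))) :=
    (TensorProduct.quotTensorEquivQuotSMul Ω[B⁄A] J).symm.injective.subsingleton
  have htop : J • (⊤ : Submodule B Ω[B⁄A]) = ⊤ := Submodule.Quotient.subsingleton_iff.mp hsub
  let m : Ω[B⁄A] →ₗ[B] Ω[B⁄A] := LinearMap.lsmul B _ (algebraMap A B f)
  have hsurj : Function.Surjective m := by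
    intro x
    have hx : x ∈ J • (⊤ : Submodule B Ω[B⁄A]) := by rw [htop]; trivial
    rw [hJ, Submodule.ideal_span_singleton_smul] at hx
    obtain ⟨y, -, hy⟩ := hx
    exact ⟨y, hy⟩
  have hinj : Function.Injective m := OrzechProperty.injective_of_surjective_endomorphism m hsurj
  have hs2 : Subsingleton Ω[Localization.Away (algebraMap A B f)⁄A] := inferInstance
  have hl := (IsLocalizedModule.subsingleton_iff (.powers (algebraMap A B f))
    (KaehlerDifferential.map A A B (Localization.Away (algebraMap A B f)))).mp hs2
  have hz : ∀ x : Ω[B⁄A], x = 0 := by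
    intro x
    obtain ⟨_, ⟨n, rfl⟩, hn⟩ := hl x
    induction n with
    | zero => simpa using hn
    | succ n ih =>
      apply ih
      apply hinj
      rw [map_zero]
      rw [LinearMap.lsmul_apply, smul_smul, ← pow_succ']
      exact hn
  exact ⟨⟨fun x y => by rw [hz x, hz y]⟩⟩

/-- Let A → B be a homomorphism of commutative rings making B a finitely
generated A-module, and f ∈ A. If the induced homomorphisms A/fA → B/fB and A_f → B_f are
both unramified, then A → B is unramified. -/
theorem stmt_5 (A B : Type) [CommRing A] [CommRing B] [Algebra A B]
    (hfin : Module.Finite A B) (f : A)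
    (h1 :
      letI : Algebra (A ⧸ Ideal.span {f}) (B ⧸ Ideal.span {algebraMap A B f}) :=
        (Ideal.Quotient.lift (Ideal.span {f})
          ((Ideal.Quotient.mk (Ideal.span {algebraMap A B f})).comp (algebraMap A B))
          (fun a ha => by
            rw [RingHom.comp_apply, Ideal.Quotient.eq_zero_iff_mem]
            exact Ideal.mem_span_singleton.mpr
              (map_dvd (algebraMap A B) (Ideal.mem_span_singleton.mp ha)))).toAlgebra
      MulUnramified (A ⧸ Ideal.span {f}) (B ⧸ Ideal.span {algebraMap A B f}))
    (h2 :
      letI : Algebra (Localization.Away f) (Localization.Away (algebraMap A B f)) :=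
        (IsLocalization.Away.map (Localization.Away f)
          (Localization.Away (algebraMap A B f)) (algebraMap A B) f).toAlgebra
      MulUnramified (Localization.Away f) (Localization.Away (algebraMap A B f))) :
    MulUnramified A B := by
  have := hfin
  let i1 : Algebra (A ⧸ Ideal.span {f}) (B ⧸ Ideal.span {algebraMap A B f}) :=
        (Ideal.Quotient.lift (Ideal.span {f})
          ((Ideal.Quotient.mk (Ideal.span {algebraMap A B f})).comp (algebraMap A B))
          (fun a ha => by
            rw [RingHom.comp_apply, Ideal.Quotient.eq_zero_iff_mem]
            exact Ideal.mem_span_singleton.mpr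
              (map_dvd (algebraMap A B) (Ideal.mem_span_singleton.mp ha)))).toAlgebra
  let i2 : Algebra (Localization.Away f) (Localization.Away (algebraMap A B f)) :=
        (IsLocalization.Away.map (Localization.Away f)
          (Localization.Away (algebraMap A B f)) (algebraMap A B) f).toAlgebra
  have t1 : IsScalarTower A (A ⧸ Ideal.span {f}) (B ⧸ Ideal.span {algebraMap A B f}) :=
    IsScalarTower.of_algebraMap_eq (fun _ => rfl)
  have t2 : IsScalarTower A (Localization.Away f) (Localization.Away (algebraMap A B f)) :=
    IsScalarTower.of_algebraMap_eq (fun x => by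
      refine (IsScalarTower.algebraMap_apply A B _ x).trans ?_
      symm
      have hy : Submonoid.powers f ≤
          (Submonoid.powers (algebraMap A B f)).comap (algebraMap A B) := by
        rintro _ ⟨n, rfl⟩
        exact ⟨n, by simp⟩
      exact IsLocalization.map_eq (M := .powers f) (T := .powers (algebraMap A B f)) hy x)
  have e0 : Algebra.EssFiniteType A (Localization.Away (algebraMap A B f)) :=
    have : Algebra.EssFiniteType B (Localization.Away (algebraMap A B f)) :=
      Algebra.EssFiniteType.of_isLocalization _ (.powers (algebraMap A B f))
    Algebra.EssFiniteType.comp A B _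
  have e1 : Algebra.EssFiniteType (A ⧸ Ideal.span {f}) (B ⧸ Ideal.span {algebraMap A B f}) :=
    Algebra.EssFiniteType.of_comp A _ _
  have e2 : Algebra.EssFiniteType (Localization.Away f) (Localization.Away (algebraMap A B f)) :=
    Algebra.EssFiniteType.of_comp A _ _
  have u1 := (mulUnramified_iff _ _).mp h1
  have u2 := (mulUnramified_iff _ _).mp h2
  rw [mulUnramified_iff]
  have : Algebra.FormallyUnramified A (Localization.Away f) :=
    Algebra.FormallyUnramified.of_isLocalization (.powers f)
  exact formallyUnramified_glue A B f
    (Algebra.FormallyUnramified.comp A (A ⧸ Ideal.span {f}) _)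
    (Algebra.FormallyUnramified.comp A (Localization.Away f) _)
end

section
/- Let A be a commutative ring and B an unramified A-algebra, with diagonal idempotent e_{B/A} ∈ B ⊗_A B (the unique idempotent satisfying μ_{B/A}(e_{B/A}) = 1 and e_{B/A} · ker(μ_{B/A}) = 0, where μ_{B/A} : B ⊗_A B → B is the multiplication map). Let C be any A-algebra. For an idempotent e ∈ B ⊗_A C, let Γ(e) : C → e·(B ⊗_A C) be the ring homomorphism c ↦ e·(1 ⊗ c) (the target being the ring e·(B ⊗_A C) with identity element e), and let Δ(e) : B → e·(B ⊗_A C) be b ↦ e·(b ⊗ 1). Then the rule φ ↦ e_φ := (id_B ⊗ φ)(e_{B/A}) defines a bijection from the set of A-algebra homomorphisms B → C onto the set of idempotents e ∈ B ⊗_A C for which Γ(e) is bijective; its inverse assigns to such an idempotent e the A-algebra homomorphism f_e := Γ(e)⁻¹ ∘ Δ(e) : B → C. -/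
open TensorProduct

/-- Let B be an unramified A-algebra with diagonal idempotent
e = e_{B/A} ∈ B ⊗_A B (the unique idempotent with μ(e) = 1 and e·ker μ = 0, where
μ : B ⊗_A B → B is the multiplication map), and let C be any A-algebra. For an idempotent
ε ∈ B ⊗_A C, the map Γ(ε) : C → ε·(B ⊗_A C) is c ↦ ε·(1 ⊗ c), and Δ(ε) : B → ε·(B ⊗_A C) is
b ↦ ε·(b ⊗ 1). Then φ ↦ e_φ := (id_B ⊗ φ)(e) is a bijection from A-algebra homomorphisms
B → C onto the set of idempotents ε ∈ B ⊗_A C for which Γ(ε) is bijective (injective into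
B ⊗_A C and surjective onto ε·(B ⊗_A C)); moreover for every φ one has
Γ(e_φ) ∘ φ = Δ(e_φ), i.e. the inverse bijection is ε ↦ f_ε := Γ(ε)⁻¹ ∘ Δ(ε). -/
theorem stmt_6 (A B C : Type) [CommRing A] [CommRing B] [CommRing C]
    [Algebra A B] [Algebra A C]
    (e : TensorProduct A B B) (he : IsIdempotentElem e)
    (hμ : LinearMap.mul' A B e = 1)
    (hker : ∀ x : TensorProduct A B B, LinearMap.mul' A B x = 0 → e * x = 0) :
    (Set.BijOn
        (fun φ : B →ₐ[A] C => Algebra.TensorProduct.map (AlgHom.id A B) φ e)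
        Set.univ
        { ε : TensorProduct A B C |
            IsIdempotentElem ε ∧
            Function.Injective (fun c : C => ε * ((1 : B) ⊗ₜ[A] c)) ∧
            ∀ x : TensorProduct A B C, ∃ c : C, ε * ((1 : B) ⊗ₜ[A] c) = ε * x })
    ∧ ∀ (φ : B →ₐ[A] C) (b : B),
        (Algebra.TensorProduct.map (AlgHom.id A B) φ e) * ((1 : B) ⊗ₜ[A] φ b)
          = (Algebra.TensorProduct.map (AlgHom.id A B) φ e) * (b ⊗ₜ[A] (1 : C)) := by
  have key : ∀ (φ : B →ₐ[A] C) (ε : TensorProduct A B C),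
      (∀ b : B, ε * ((1 : B) ⊗ₜ[A] φ b) = ε * (b ⊗ₜ[A] (1 : C))) →
      ∀ x : TensorProduct A B C,
        ε * ((1 : B) ⊗ₜ[A] (Algebra.TensorProduct.productMap φ (AlgHom.id A C) x)) = ε * x := by
    intro φ ε h x
    induction x using TensorProduct.induction_on with
    | zero => simp
    | tmul b c =>
      have h1 : (1 : B) ⊗ₜ[A] (φ b * c) = ((1 : B) ⊗ₜ[A] φ b) * ((1 : B) ⊗ₜ[A] c) := by
        simp
      have h2 : b ⊗ₜ[A] c = (b ⊗ₜ[A] (1 : C)) * ((1 : B) ⊗ₜ[A] c) := by simp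
      rw [Algebra.TensorProduct.productMap_apply_tmul, AlgHom.id_apply, h1, h2,
        ← mul_assoc, ← mul_assoc, h b]
    | add x y hx hy => rw [map_add, TensorProduct.tmul_add, mul_add, mul_add, hx, hy]
  have rel : ∀ (φ : B →ₐ[A] C) (b : B),
        (Algebra.TensorProduct.map (AlgHom.id A B) φ e) * ((1 : B) ⊗ₜ[A] φ b)
          = (Algebra.TensorProduct.map (AlgHom.id A B) φ e) * (b ⊗ₜ[A] (1 : C)) := by
    intro φ b
    have h := hker ((1 : B) ⊗ₜ[A] b - b ⊗ₜ[A] (1 : B)) (by simp)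
    have h2 := congrArg (Algebra.TensorProduct.map (AlgHom.id A B) φ) h
    rw [mul_sub, map_sub, map_mul, map_mul, map_zero] at h2
    simpa using sub_eq_zero.mp h2
  have one : ∀ φ : B →ₐ[A] C, Algebra.TensorProduct.productMap φ (AlgHom.id A C)
      (Algebra.TensorProduct.map (AlgHom.id A B) φ e) = 1 := by
    intro φ
    have h : ∀ x : TensorProduct A B B, Algebra.TensorProduct.productMap φ (AlgHom.id A C)
      (Algebra.TensorProduct.map (AlgHom.id A B) φ x) = φ (LinearMap.mul' A B x) := by
      intro x
      induction x using TensorProduct.induction_on with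
      | zero => simp
      | tmul b c => simp
      | add x y hx hy => simp only [map_add, hx, hy]
    rw [h, hμ, map_one]
  have inj : ∀ φ : B →ₐ[A] C, Function.Injective (fun c : C =>
      (Algebra.TensorProduct.map (AlgHom.id A B) φ e) * ((1 : B) ⊗ₜ[A] c)) := by
    intro φ c d h
    have h2 := congrArg (Algebra.TensorProduct.productMap φ (AlgHom.id A C)) h
    simp only [map_mul, one] at h2
    simpa using h2
  refine ⟨⟨?_, ?_, ?_⟩, rel⟩
  · intro φ _
    exact ⟨he.map _, inj φ, fun x => ⟨_, key φ _ (rel φ) x⟩⟩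
  · intro φ _ ψ _ h
    ext b
    apply inj φ
    change _ * _ = _ * _
    simp only at h
    rw [rel φ b, h, rel ψ b]
  · rintro ε ⟨hε, hinj, hsurj⟩
    choose f hf using fun b : B => hsurj (b ⊗ₜ[A] (1 : C))
    have uniq : ∀ c d : C, ε * ((1 : B) ⊗ₜ[A] c) = ε * ((1 : B) ⊗ₜ[A] d) → c = d :=
      fun c d h => hinj h
    let F : B →ₐ[A] C :=
      { toFun := f
        map_one' := uniq _ _ (hf 1)
        map_mul' := fun x y => uniq _ _ (by
          have h1 : (1 : B) ⊗ₜ[A] (f x * f y) = ((1 : B) ⊗ₜ[A] f x) * ((1 : B) ⊗ₜ[A] f y) := by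
            simp
          have h2 : (x * y) ⊗ₜ[A] (1 : C) = (x ⊗ₜ[A] (1 : C)) * (y ⊗ₜ[A] (1 : C)) := by simp
          rw [hf, h1, h2, ← mul_assoc, ← mul_assoc, hf x, mul_right_comm, ← hf y,
            mul_right_comm])
        map_zero' := uniq _ _ (by rw [hf]; simp)
        map_add' := fun x y => uniq _ _ (by
          rw [hf, TensorProduct.add_tmul, TensorProduct.tmul_add, mul_add, mul_add, hf, hf])
        commutes' := fun a => uniq _ _ (by
          rw [hf, Algebra.algebraMap_eq_smul_one, Algebra.algebraMap_eq_smul_one,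
            TensorProduct.smul_tmul]) }
    have hF : ∀ b : B, ε * ((1 : B) ⊗ₜ[A] F b) = ε * (b ⊗ₜ[A] (1 : C)) := hf
    refine ⟨F, Set.mem_univ _, ?_⟩
    have hm : Algebra.TensorProduct.productMap F (AlgHom.id A C) ε = 1 := by
      apply uniq
      rw [key F ε hF ε, hε.eq, ← Algebra.TensorProduct.one_def, mul_one]
    have e1 := key F ε hF (Algebra.TensorProduct.map (AlgHom.id A B) F e)
    have e2 := key F _ (rel F) ε
    rw [one, ← Algebra.TensorProduct.one_def, mul_one] at e1
    rw [hm, ← Algebra.TensorProduct.one_def, mul_one] at e2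
    change Algebra.TensorProduct.map (AlgHom.id A B) F e = ε
    rw [e2, mul_comm, ← e1]
end

section
/- Let (A_n ; φ_n : A_{n+1} → A_n)_{n∈ℕ} be an inverse system of commutative rings such that: (a) each φ_n is surjective, and (b) ker(φ_n) = K_{n+1}^{n+1}, where K_{n+1} := ker(A_{n+1} → A₀) is the kernel of the composite transition map φ₀ ∘ ⋯ ∘ φ_n. Let A_∞ := lim_n A_n and I := ker(A_∞ → A₀). Then for every n ∈ ℕ, the kernel of the projection A_∞ → A_n equals the closure of I^{n+1} in the projective-limit topology, i.e. ker(A_∞ → A_n) = ⋂_{m∈ℕ} ( I^{n+1} + ker(A_∞ → A_m) ). -/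
set_option synthInstance.maxHeartbeats 800000
set_option maxHeartbeats 1600000

/-- The inverse limit lim_n A_n of an inverse system of commutative rings, realized as the
subring of the product consisting of the compatible sequences. -/
def invLim (A : ℕ → Type) [∀ n, CommRing (A n)] (φ : ∀ n, A (n + 1) →+* A n) :
    Subring (∀ n, A n) where
  carrier := { x | ∀ n, φ n (x (n + 1)) = x n }
  zero_mem' := fun n => by simp
  one_mem' := fun n => by simp
  add_mem' := fun {x y} hx hy n => by simp [hx n, hy n]
  mul_mem' := fun {x y} hx hy n => by simp [hx n, hy n]
  neg_mem' := fun {x} hx n => by simp [hx n]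

/-- The composite transition map A_n →+* A_0 of an inverse system, i.e. φ₀ ∘ ⋯ ∘ φ_{n-1}. -/
def toZero (A : ℕ → Type) [∀ n, CommRing (A n)] (φ : ∀ n, A (n + 1) →+* A n) :
    ∀ n, A n →+* A 0
  | 0 => RingHom.id (A 0)
  | (n + 1) => (toZero A φ n).comp (φ n)

/-- The projection A_∞ →+* A_n from the inverse limit. -/
def invLimProj (A : ℕ → Type) [∀ n, CommRing (A n)] (φ : ∀ n, A (n + 1) →+* A n) (n : ℕ) :
    invLim A φ →+* A n :=
  (Pi.evalRingHom A n).comp (invLim A φ).subtype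

theorem partial_seq (A : ℕ → Type) [∀ n, CommRing (A n)] (φ : ∀ n, A (n + 1) →+* A n) :
    ∀ (k : ℕ) (a : A k), ∃ x : ∀ n, A n, x k = a ∧ ∀ n, n < k → φ n (x (n + 1)) = x n := by
  intro k
  induction k with
  | zero => exact fun a => ⟨Function.update 0 0 a, by simp, by simp⟩
  | succ k ih =>
    intro a
    obtain ⟨x, hx, hc⟩ := ih (φ k a)
    refine ⟨Function.update x (k + 1) a, by simp, fun n hn => ?_⟩
    rw [Function.update_of_ne (show n ≠ k + 1 by omega)]
    rcases Nat.lt_succ_iff_lt_or_eq.mp hn with h | h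
    · rw [Function.update_of_ne (show n + 1 ≠ k + 1 by omega)]
      exact hc n h
    · subst h
      simp [hx]

theorem proj_surj (A : ℕ → Type) [∀ n, CommRing (A n)] (φ : ∀ n, A (n + 1) →+* A n)
    (hsurj : ∀ n, Function.Surjective (φ n)) (m : ℕ) :
    Function.Surjective (invLimProj A φ m) := by
  intro a
  obtain ⟨y, hy, hc⟩ := partial_seq A φ m a
  choose s hs using hsurj
  let z : ∀ n, A n := fun n => Nat.rec (motive := fun n => A n) (y 0)
    (fun n zn => if n + 1 ≤ m then y (n + 1) else s n zn) n
  have hz1 : ∀ n, z (n + 1) = if n + 1 ≤ m then y (n + 1) else s n (z n) := fun n => rfl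
  have hz : ∀ n, n ≤ m → z n = y n := by
    intro n hn
    cases n with
    | zero => rfl
    | succ n => rw [hz1, if_pos hn]
  refine ⟨⟨z, fun n => ?_⟩, (hz m le_rfl).trans hy⟩
  by_cases h : n + 1 ≤ m
  · rw [hz _ h, hz n (by omega)]
    exact hc n h
  · rw [hz1, if_neg h, hs]

theorem proj_succ (A : ℕ → Type) [∀ n, CommRing (A n)] (φ : ∀ n, A (n + 1) →+* A n) (m : ℕ) :
    (φ m).comp (invLimProj A φ (m + 1)) = invLimProj A φ m := by
  ext x
  exact x.2 m

theorem toZero_proj (A : ℕ → Type) [∀ n, CommRing (A n)] (φ : ∀ n, A (n + 1) →+* A n) (m : ℕ) :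
    (toZero A φ m).comp (invLimProj A φ m) = invLimProj A φ 0 := by
  induction m with
  | zero => rfl
  | succ m ih => rw [toZero, RingHom.comp_assoc, proj_succ, ih]

theorem key_eq (A : ℕ → Type) [∀ n, CommRing (A n)] (φ : ∀ n, A (n + 1) →+* A n)
    (hsurj : ∀ n, Function.Surjective (φ n))
    (hker : ∀ n, RingHom.ker (φ n) = (RingHom.ker (toZero A φ (n + 1))) ^ (n + 1)) (m : ℕ) :
    RingHom.ker (invLimProj A φ m) =
      RingHom.ker (invLimProj A φ 0) ^ (m + 1) ⊔ RingHom.ker (invLimProj A φ (m + 1)) := by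
  have hs := proj_surj A φ hsurj (m + 1)
  have h1 : Ideal.map (invLimProj A φ (m + 1)) (RingHom.ker (invLimProj A φ 0)) =
      RingHom.ker (toZero A φ (m + 1)) := by
    rw [← toZero_proj A φ (m + 1), ← RingHom.comap_ker, Ideal.map_comap_of_surjective _ hs]
  rw [← proj_succ A φ m, ← RingHom.comap_ker, hker, ← h1, ← Ideal.map_pow,
    Ideal.comap_map_of_surjective _ hs]
  rfl

/-- Let (A_n; φ_n : A_{n+1} → A_n) be an inverse system of commutative rings
with (a) each φ_n surjective and (b) ker(φ_n) = K_{n+1}^{n+1} where K_{n+1} is the kernel of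
the composite A_{n+1} → A₀. Let A_∞ := lim_n A_n and I := ker(A_∞ → A₀). Then for every n,
the kernel of A_∞ → A_n equals the closure of I^{n+1} in the projective-limit topology, i.e.
ker(A_∞ → A_n) = ⋂_m ( I^{n+1} + ker(A_∞ → A_m) ). -/
theorem stmt_8 (A : ℕ → Type) [∀ n, CommRing (A n)] (φ : ∀ n, A (n + 1) →+* A n)
    (hsurj : ∀ n, Function.Surjective (φ n))
    (hker : ∀ n, RingHom.ker (φ n) = (RingHom.ker (toZero A φ (n + 1))) ^ (n + 1)) :
    ∀ n : ℕ,
      RingHom.ker (invLimProj A φ n)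
        = ⨅ m : ℕ, (RingHom.ker (invLimProj A φ 0)) ^ (n + 1) ⊔ RingHom.ker (invLimProj A φ m) := by
  intro n
  have key := key_eq A φ hsurj hker
  have anti : Antitone fun m => RingHom.ker (invLimProj A φ m) :=
    antitone_nat_of_succ_le fun m => by
      rw [key m]
      exact le_sup_right
  apply le_antisymm
  · refine le_iInf fun m => ?_
    rcases le_total m n with h | h
    · exact (anti h).trans le_sup_right
    · induction m, h using Nat.le_induction with
      | base => exact le_sup_right
      | succ m hm ih =>
        refine ih.trans (sup_le le_sup_left ?_)
        rw [key m]
        exact sup_le_sup_right (Ideal.pow_le_pow_right (by omega)) _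
  · refine (iInf_le _ n).trans (sup_le ?_ le_rfl)
    rw [key n]
    exact le_sup_left
end

section
/- Let B be a commutative ring and g₁, …, g_k ∈ B. Then the ideal generated by g₁, …, g_k equals B (i.e. Σᵢ gᵢB = B) if and only if the natural ring homomorphism B → ∏ᵢ₌₁ᵏ B_{gᵢ} into the product of the localizations at the powers of the gᵢ is faithfully flat. -/
/-- Let B be a commutative ring and g₁, …, g_k ∈ B. Then the ideal generated
by the gᵢ equals B if and only if the natural ring homomorphism B → ∏ᵢ B_{gᵢ} into the product
of the localizations at the powers of the gᵢ is faithfully flat (i.e. the product, with its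
canonical B-module structure, is a faithfully flat B-module). -/
theorem stmt_9 (B : Type) [CommRing B] (k : ℕ) (g : Fin k → B) :
    Ideal.span (Set.range g) = ⊤ ↔
      Module.FaithfullyFlat B (∀ i : Fin k, Localization.Away (g i)) := by
  classical
  constructor
  · intro h
    have hfl : ∀ i, Module.Flat B (Localization.Away (g i)) := fun i =>
      IsLocalization.flat _ (Submonoid.powers (g i))
    have : Module.Flat B (∀ i : Fin k, Localization.Away (g i)) :=
      Module.Flat.of_linearEquiv
        (DirectSum.linearEquivFunOnFintype B (Fin k) (fun i => Localization.Away (g i))).symm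
    refine ⟨fun {m} hm htop => ?_⟩
    have hex : ∃ i, g i ∉ m := by
      by_contra! hc
      apply hm.ne_top
      rw [eq_top_iff, ← h, Ideal.span_le]
      rintro _ ⟨i, rfl⟩
      exact hc i
    obtain ⟨i, hi⟩ := hex
    have h1 := congrArg (Submodule.map
      (LinearMap.proj i : (∀ i : Fin k, Localization.Away (g i)) →ₗ[B] _)) htop
    rw [Submodule.map_smul'', Submodule.map_top, LinearMap.range_eq_top.2
      (LinearMap.proj_surjective i), Ideal.smul_top_eq_map,
      Submodule.restrictScalars_eq_top_iff] at h1
    have hp := IsLocalization.isPrime_of_isPrime_disjoint (Submonoid.powers (g i))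
      (Localization.Away (g i)) m hm.isPrime
      ((Ideal.disjoint_powers_iff_notMem _ hm.isPrime.isRadical).2 hi)
    exact hp.ne_top h1
  · intro h
    by_contra hne
    obtain ⟨m, hm, hle⟩ := Ideal.exists_le_maximal _ hne
    apply h.submodule_ne_top hm
    rw [eq_top_iff]
    intro x _
    rw [← Finset.univ_sum_single x]
    refine Submodule.sum_mem _ fun i _ => ?_
    have : Pi.single i (x i) = g i • (Pi.single i (IsLocalization.Away.invSelf (g i) * x i) :
        ∀ i : Fin k, Localization.Away (g i)) := by
      rw [← Pi.single_smul, Algebra.smul_def, ← mul_assoc, IsLocalization.Away.mul_invSelf, one_mul]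
    rw [this]
    exact Submodule.smul_mem_smul (hle (Ideal.subset_span ⟨i, rfl⟩)) trivial
end

section
/- Let π : R → R₀ be a surjective homomorphism of commutative rings whose kernel is a nilpotent ideal, and let n ∈ ℕ. Let S, T ∈ M_n(R) be idempotent matrices with images S₀ := π(S), T₀ := π(T) in M_n(R₀), and suppose φ₀, ψ₀ ∈ M_n(R₀) satisfy: φ₀·S₀ = 0 = T₀·φ₀; ψ₀·T₀ = 0 = S₀·ψ₀; and (1−S₀)·(ψ₀·φ₀ − 1) = 0 = (1−T₀)·(φ₀·ψ₀ − 1). Then there exist φ, ψ ∈ M_n(R) with π(φ) = φ₀, π(ψ) = ψ₀, and: φ·S = 0 = T·φ; ψ·T = 0 = S·ψ; (1−S)·(ψ·φ − 1) = 0 = (1−T)·(φ·ψ − 1). (This expresses that the scheme classifying such quadruples (S, T, φ, ψ) is smooth over the product of two copies of the scheme of idempotent matrices.) -/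
theorem lift_aux {A B : Type*} [Ring A] [Ring B] (p : A →+* B)
    (hs : Function.Surjective p) (hu : ∀ x, p x = 1 → IsUnit x)
    (S T : A) (hS : S * S = S) (hT : T * T = T) (a₀ b₀ : B)
    (h1 : a₀ * p S = 0) (h1' : p T * a₀ = 0)
    (h2 : b₀ * p T = 0) (h2' : p S * b₀ = 0)
    (h3 : (1 - p S) * (b₀ * a₀ - 1) = 0)
    (h3' : (1 - p T) * (a₀ * b₀ - 1) = 0) :
    ∃ a b : A, p a = a₀ ∧ p b = b₀ ∧ a * S = 0 ∧ T * a = 0 ∧ b * T = 0 ∧ S * b = 0 ∧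
      (1 - S) * (b * a - 1) = 0 ∧ (1 - T) * (a * b - 1) = 0 := by
  obtain ⟨a', ha'⟩ := hs a₀
  obtain ⟨b', hb'⟩ := hs b₀
  have hSr : (1 - S) * S = 0 := by rw [sub_mul, hS]; simp
  have hSl : S * (1 - S) = 0 := by rw [mul_sub, hS]; simp
  have hTr : (1 - T) * T = 0 := by rw [sub_mul, hT]; simp
  have hTl : T * (1 - T) = 0 := by rw [mul_sub, hT]; simp
  obtain ⟨a, ha⟩ : ∃ a, a = (1 - T) * a' * (1 - S) := ⟨_, rfl⟩
  obtain ⟨b, hb⟩ : ∃ b, b = (1 - S) * b' * (1 - T) := ⟨_, rfl⟩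
  have aS : a * S = 0 := by rw [ha, mul_assoc, hSr, mul_zero]
  have Ta : T * a = 0 := by rw [ha, mul_assoc, ← mul_assoc, hTl, zero_mul]
  have bT : b * T = 0 := by rw [hb, mul_assoc, hTr, mul_zero]
  have Sb : S * b = 0 := by rw [hb, mul_assoc, ← mul_assoc, hSl, zero_mul]
  have pa : p a = a₀ := by
    rw [ha]; simp only [map_mul, map_sub, map_one, ha', mul_sub, sub_mul, one_mul, mul_one]
    simp [h1, h1']
  have pb : p b = b₀ := by
    rw [hb]; simp only [map_mul, map_sub, map_one, hb', mul_sub, sub_mul, one_mul, mul_one]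
    simp [h2, h2']
  have e1 : p (S + b * a) = 1 := by
    have : (1 - p S) * (b₀ * a₀ - 1) = b₀ * a₀ + p S - 1 - (p S * b₀) * a₀ := by noncomm_ring
    rw [this, h2', zero_mul, sub_zero, sub_eq_zero] at h3
    rw [map_add, map_mul, pa, pb, add_comm, h3]
  have e2 : p (T + a * b) = 1 := by
    have : (1 - p T) * (a₀ * b₀ - 1) = a₀ * b₀ + p T - 1 - (p T * a₀) * b₀ := by noncomm_ring
    rw [this, h1', zero_mul, sub_zero, sub_eq_zero] at h3'
    rw [map_add, map_mul, pa, pb, add_comm, h3']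
  obtain ⟨u, hu1⟩ := hu _ e1
  obtain ⟨v, hv1⟩ := hu _ e2
  obtain ⟨w, hw⟩ : ∃ w : A, w = ↑u⁻¹ := ⟨_, rfl⟩
  have wu : w * (S + b * a) = 1 := by rw [hw, ← hu1]; simp
  have uw : (S + b * a) * w = 1 := by rw [hw, ← hu1]; simp
  have pw : p w = 1 := by
    have := congrArg p wu
    rwa [map_mul, e1, mul_one, map_one] at this
  have uS : (S + b * a) * S = S := by rw [add_mul, hS, mul_assoc, aS, mul_zero, add_zero]
  have Su : S * (S + b * a) = S := by rw [mul_add, hS, ← mul_assoc, Sb, zero_mul, add_zero]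
  have wS : w * S = S := by
    calc w * S = w * ((S + b * a) * S) := by rw [uS]
      _ = S := by rw [← mul_assoc, wu, one_mul]
  have Sw : S * w = S := by
    calc S * w = (S * (S + b * a)) * w := by rw [Su]
      _ = S := by rw [mul_assoc, uw, mul_one]
  have wba : w * b * a = 1 - S := by
    rw [mul_add, wS] at wu
    rw [mul_assoc, ← wu]; abel
  refine ⟨a, w * b, pa, by rw [map_mul, pw, pb, one_mul], aS, Ta,
    by rw [mul_assoc, bT, mul_zero], by rw [← mul_assoc, Sw, Sb], ?_, ?_⟩
  · rw [wba, sub_sub_cancel_left, mul_neg, hSr, neg_zero]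
  · have key : (1 - T) * (a * (w * b) - 1) * (T + a * b) = 0 := by
      have : (1 - T) * (a * (w * b) - 1) * (T + a * b) =
        (1 - T) * (a * w * (b * T) + a * (w * b * a) * b - a * b) - (1 - T) * T := by
        noncomm_ring
      rw [this, wba, bT, hTr, mul_sub a, aS]
      simp
    rw [← hv1] at key
    exact (Units.mul_left_eq_zero v).1 key

/-- Lifting of quadruples (S, T, φ, ψ) along a surjection with nilpotent
kernel: given idempotent matrices S, T over R and matrices φ₀, ψ₀ over R₀ satisfying the
displayed identities with the images of S and T, there exist lifts φ, ψ over R satisfying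
the same identities with S and T. -/
theorem stmt_11 (R R₀ : Type) [CommRing R] [CommRing R₀] (π : R →+* R₀)
    (hsurj : Function.Surjective π) (hnil : IsNilpotent (RingHom.ker π))
    (n : ℕ) (S T : Matrix (Fin n) (Fin n) R)
    (hS : S * S = S) (hT : T * T = T)
    (φ₀ ψ₀ : Matrix (Fin n) (Fin n) R₀)
    (h1 : φ₀ * S.map π = 0) (h1' : T.map π * φ₀ = 0)
    (h2 : ψ₀ * T.map π = 0) (h2' : S.map π * ψ₀ = 0)
    (h3 : (1 - S.map π) * (ψ₀ * φ₀ - 1) = 0)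
    (h3' : (1 - T.map π) * (φ₀ * ψ₀ - 1) = 0) :
    ∃ φ ψ : Matrix (Fin n) (Fin n) R,
      φ.map π = φ₀ ∧ ψ.map π = ψ₀ ∧
      φ * S = 0 ∧ T * φ = 0 ∧ ψ * T = 0 ∧ S * ψ = 0 ∧
      (1 - S) * (ψ * φ - 1) = 0 ∧ (1 - T) * (φ * ψ - 1) = 0 := by
  refine lift_aux (π.mapMatrix (m := Fin n)) ?_ ?_ S T hS hT φ₀ ψ₀ h1 h1' h2 h2' h3 h3'
  · intro M
    choose g hg using hsurj
    exact ⟨M.map g, by ext i j; simp [hg]⟩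
  · intro M hM
    rw [Matrix.isUnit_iff_isUnit_det]
    have hd : π M.det = 1 := by rw [RingHom.map_det, hM, Matrix.det_one]
    have hk : M.det - 1 ∈ RingHom.ker π := by
      rw [RingHom.mem_ker, map_sub, hd, map_one, sub_self]
    obtain ⟨k, hk'⟩ := hnil
    have hn : IsNilpotent (M.det - 1) := by
      refine ⟨k, ?_⟩
      have := Ideal.pow_mem_pow hk k
      rw [hk'] at this
      simpa using this
    have := hn.isUnit_one_add
    simpa using this
end

section
/- Let R be a commutative ring, F := R[X₁,…,X_N], let f₁,…,f_q ∈ F, let J ⊆ F be the ideal they generate, S := F/J, ∂ : J/J² → S ⊗_F Ω_{F/R} the conormal map, and H ⊆ F the ideal of all h ∈ F such that scalar multiplication by h on J/J² factors through ∂. Fix p with 1 ≤ p ≤ min(q, N), strictly increasing indices 1 ≤ α₁ < ⋯ < α_p ≤ q and 1 ≤ β₁ < ⋯ < β_p ≤ N, let J_α ⊆ F be the ideal generated by f_{α₁},…,f_{α_p}, and let δ := det( ∂f_{α_j}/∂X_{β_i} )_{1≤i,j≤p} be the corresponding p×p minor of the Jacobian matrix. Then for every x ∈ F with x·J ⊆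 J_α, one has x·δ ∈ H. (Consequently Elkik's ideal H_S = Σ_p Σ_α Δ_α·(J_α : J) is contained in H = H_R(F,J).) -/
/-- `elkikH R N J` is, for an ideal `J` of `F := R[X₁,…,X_N]` with `S := F/J`, the set (in
fact ideal) of all `h ∈ F` such that scalar multiplication by `h` on the conormal module
`J/J²` factors through the conormal map `∂ : J/J² → S ⊗_F Ω_{F/R}`; equivalently (since
`J/J²` is an `S`-module) such that there is an `F`-linear map `ψ : Ω_{F/R} → J/J²` with
`ψ(dx) = h·(x mod J²)` for every `x ∈ J`.  It equals `Ann_F Ext¹_S(𝕃_{S/R}, J/J²)`, the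
ideal denoted `H_R(F,J)` in the paper. -/
def elkikH (R : Type) [CommRing R] (N : ℕ) (J : Ideal (MvPolynomial (Fin N) R)) :
    Set (MvPolynomial (Fin N) R) :=
  { h | ∃ ψ : KaehlerDifferential R (MvPolynomial (Fin N) R) →ₗ[MvPolynomial (Fin N) R]
          J.Cotangent,
      ∀ x : J, ψ (KaehlerDifferential.D R (MvPolynomial (Fin N) R)
          (x : MvPolynomial (Fin N) R)) = h • J.toCotangent x }

/-- With `J ⊆ F = R[X₁,…,X_N]` generated by `f₁,…,f_q`, for strictly
increasing index maps `α : Fin p → Fin q`, `β : Fin p → Fin N` (with `1 ≤ p`), let `J_α` be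
the ideal generated by the `f_{α j}` and `δ` the corresponding `p × p` minor of the Jacobian
matrix. Then for every `x ∈ F` with `x·J ⊆ J_α` one has `x·δ ∈ H_R(F,J)`. -/
theorem stmt_14 (R : Type) [CommRing R] (N q : ℕ)
    (f : Fin q → MvPolynomial (Fin N) R)
    (p : ℕ) (hp : 1 ≤ p)
    (α : Fin p → Fin q) (hα : StrictMono α)
    (β : Fin p → Fin N) (hβ : StrictMono β)
    (x : MvPolynomial (Fin N) R)
    (hx : ∀ y ∈ Ideal.span (Set.range f), x * y ∈ Ideal.span (Set.range (f ∘ α))) :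
    x * Matrix.det (Matrix.of fun i j : Fin p => MvPolynomial.pderiv (β i) (f (α j)))
      ∈ elkikH R N (Ideal.span (Set.range f)) := by
  classical
  set J := Ideal.span (Set.range f) with hJ
  set M : Matrix (Fin p) (Fin p) (MvPolynomial (Fin N) R) :=
    Matrix.of fun i j : Fin p => MvPolynomial.pderiv (β i) (f (α j)) with hM
  have hfJ : ∀ k, f k ∈ J := fun k => Ideal.subset_span ⟨k, rfl⟩
  have hkill : ∀ y ∈ J, ∀ m : J.Cotangent, y • m = 0 := by
    intro y hy m
    obtain ⟨z, rfl⟩ := Ideal.toCotangent_surjective _ m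
    rw [← map_smul, Ideal.toCotangent_eq_zero, pow_two]
    exact Ideal.mul_mem_mul hy z.2
  let b := KaehlerDifferential.mvPolynomialBasis R (Fin N)
  let φ : KaehlerDifferential R (MvPolynomial (Fin N) R) →ₗ[MvPolynomial (Fin N) R]
      J.Cotangent :=
    ∑ k, ∑ i, M.adjugate k i •
      ((b.coord (β i)).smulRight (J.toCotangent ⟨f (α k), hfJ _⟩))
  have hφ : ∀ z, φ (KaehlerDifferential.D R _ z) =
      ∑ k, (∑ i, M.adjugate k i * MvPolynomial.pderiv (β i) z) •
        J.toCotangent ⟨f (α k), hfJ _⟩ := by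
    intro z
    simp only [φ, b, LinearMap.sum_apply, LinearMap.smul_apply, LinearMap.smulRight_apply,
      Module.Basis.coord_apply, KaehlerDifferential.mvPolynomialBasis_repr_apply,
      Finset.sum_smul, mul_smul]
  have hφf : ∀ j, φ (KaehlerDifferential.D R _ (f (α j))) =
      M.det • J.toCotangent ⟨f (α j), hfJ _⟩ := by
    intro j
    rw [hφ]
    have h1 : ∀ k, (∑ i, M.adjugate k i * MvPolynomial.pderiv (β i) (f (α j))) =
        if k = j then M.det else 0 := by
      intro k
      have := congrFun (congrFun (Matrix.adjugate_mul M) k) j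
      simpa [Matrix.mul_apply, Matrix.one_apply, hM] using this
    simp only [h1, ite_smul, zero_smul, Finset.sum_ite_eq', Finset.mem_univ, if_true]
  have key : ∀ z ∈ Ideal.span (Set.range (f ∘ α)), ∃ hz : z ∈ J,
      φ (KaehlerDifferential.D R _ z) = M.det • J.toCotangent ⟨z, hz⟩ := by
    intro z hz
    induction hz using Submodule.span_induction with
    | mem z hz =>
      obtain ⟨j, rfl⟩ := hz
      exact ⟨hfJ _, hφf j⟩
    | zero =>
      refine ⟨J.zero_mem, ?_⟩
      have : (⟨0, J.zero_mem⟩ : J) = 0 := rfl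
      rw [this, map_zero, map_zero, map_zero, smul_zero]
    | add u v _ _ hu hv =>
      obtain ⟨hu, hu'⟩ := hu
      obtain ⟨hv, hv'⟩ := hv
      refine ⟨J.add_mem hu hv, ?_⟩
      have : (⟨u + v, J.add_mem hu hv⟩ : J) = ⟨u, hu⟩ + ⟨v, hv⟩ := rfl
      rw [this, map_add, map_add, map_add, smul_add, hu', hv']
    | smul a u _ hu =>
      obtain ⟨hu, hu'⟩ := hu
      refine ⟨J.mul_mem_left a hu, ?_⟩
      have : (⟨a • u, J.mul_mem_left a hu⟩ : J) = a • ⟨u, hu⟩ := rfl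
      rw [this, smul_eq_mul, Derivation.leibniz, map_add, map_smul, map_smul, map_smul, hu',
        hkill u hu, add_zero, smul_comm]
  refine ⟨x • φ, ?_⟩
  rintro ⟨y, hy⟩
  obtain ⟨hz, h⟩ := key _ (hx y hy)
  have : (⟨x * y, hz⟩ : J) = x • ⟨y, hy⟩ := rfl
  rw [this, Derivation.leibniz, map_add, map_smul, map_smul, map_smul,
    hkill y hy, add_zero] at h
  rw [LinearMap.smul_apply, h, smul_comm, mul_smul]
end
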